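/- arXiv:2504.01479 — 7 statements merged into one kernel-verified Lean document; each statement's English description precedes it below -/
import Mathlib

section
/- For every positive integer N and every λ ∈ ℂ, the determinant of the n-order even generalized polarization matrix satisfies det M_{N,c}^{(n)}(λ) = (−1)^{⌊N/2⌋} · Σ_{k=0}^{N} (λ^{N−k} / 2^k) · ( Σ_{1 ≤ i_1 < i_2 < ⋯ < i_k ≤ N} (−1)^{i_1+⋯+i_k} · exp(2 n Σ_{l=1}^{k} (−1)^l ξ_{i_l}) ), where for k = 0 the inner sum is 1 (so the k = 0 term is λ^N). -/
/-!
Write `x_i = e^{nξ_i}` and `a_i = e^{-nξ_i}`. Then `M_{N,c}^{(n)}(λ)` is `Λ + K + s a aᵀ` at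
`s = -1/2`, where `Λ = diag(λ_i)` and `K` is antisymmetric with entries `-a_i x_j / 2` above the
diagonal. Off the diagonal, the last column and the last row of the leading block of size `m + 1`
are multiples of `a`, so eliminating them by a Schur complement only shifts the parameter `s` of
the leading block of size `m`. Hence `det (Λ + K + s a aᵀ) = A_m - 2 s C_m` with
`A_{m+1} = λ_{m+1} A_m - (x² / 2) C_m` and `C_{m+1} = λ_{m+1} C_m - (a² / 2) A_m`
(`det_rankOneFamily`).

The right-hand side is a sum over subsets of `{1, …, N}`. Its parts over subsets of even and of odd
cardinality satisfy the same recursion up to the sign `(-1)^⌊N/2⌋`, by splitting according to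
whether the largest index belongs to the subset (`parityPart_succ`). At `s = -1/2` the determinant
is `A_N + C_N`, the sum of the two parts.
-/

open Finset

/-- The signed exponential sum
`Σ_{lo ≤ i_1 < ⋯ < i_k ≤ hi} (−1)^{i_1+⋯+i_k} exp(2 n Σ_{l=1}^{k} (−1)^l ξ_{i_l})`,
where the `l`-th smallest element of a subset `s` carries the sign `(−1)^l`
(the position of `i ∈ s` is `(s.filter (· ≤ i)).card`). For `k = 0` the sum is `1`. -/
noncomputable def sgnExpSum (n : ℕ) (ξ : ℕ → ℝ) (lo hi k : ℕ) : ℝ :=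
  ∑ s ∈ (Finset.Icc lo hi).powersetCard k,
    (-1 : ℝ) ^ (∑ i ∈ s, i) *
      Real.exp (2 * n * ∑ i ∈ s, (-1 : ℝ) ^ ((s.filter (· ≤ i)).card) * ξ i)

/-- The `n`-order even generalized polarization matrix `M_{N,c}^{(n)}(λ)`:
with 1-based indices `p = i+1`, `q = j+1`, the `(p,p)` entry is
`(−1)^{p−1} λ − (1/2) e^{−2nξ_p}`, the `(p,q)` entry for `p < q` is
`−cosh(nξ_q) e^{−nξ_p}`, and for `p > q` it is `sinh(nξ_p) e^{−nξ_q}`. -/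
noncomputable def Mc (n N : ℕ) (ξ : ℕ → ℝ) (l : ℂ) : Matrix (Fin N) (Fin N) ℂ :=
  fun i j =>
    if i = j then
      (-1 : ℂ) ^ (i : ℕ) * l - ((Real.exp (-(2 * n * ξ ((i : ℕ) + 1))) / 2 : ℝ) : ℂ)
    else if i < j then
      -(((Real.cosh (n * ξ ((j : ℕ) + 1)) * Real.exp (-(n * ξ ((i : ℕ) + 1)))) : ℝ) : ℂ)
    else
      (((Real.sinh (n * ξ ((i : ℕ) + 1)) * Real.exp (-(n * ξ ((j : ℕ) + 1)))) : ℝ) : ℂ)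

/-- The leading `m × m` block of `Λ + K + s a aᵀ`: `Λ = diag L`, and `K` is the antisymmetric matrix
with entries `-a_i x_j / 2` above the diagonal. -/
noncomputable def rankOneFamily (a x L : ℕ → ℂ) (m : ℕ) (s : ℂ) : Matrix (Fin m) (Fin m) ℂ :=
  fun i j => s * a i * a j +
    (if i = j then L i else if i < j then -(a i * x j / 2) else x i * a j / 2)

/-- The pair `(A_m, C_m)` with `det (rankOneFamily a x L m s) = A_m - 2 s C_m`. -/
noncomputable def detCoeffs (a x L : ℕ → ℂ) : ℕ → ℂ × ℂ
  | 0 => (1, 0)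
  | m + 1 =>
    (L m * (detCoeffs a x L m).1 - x m ^ 2 / 2 * (detCoeffs a x L m).2,
      L m * (detCoeffs a x L m).2 - a m ^ 2 / 2 * (detCoeffs a x L m).1)

/-- Determinant of a matrix `G` bordered by multiples of `v`, when `det (G + t v vᵀ)` is known
to be affine in `t`. -/
lemma det_bordered {m : ℕ} (G : Matrix (Fin m) (Fin m) ℂ) (v : Fin m → ℂ) (α β : ℂ)
    (h : ∀ t : ℂ, (G + Matrix.of fun i j => t * v i * v j).det = α + t * β) (p q d : ℂ) :
    (Matrix.fromBlocks G (Matrix.of fun i (_ : Fin 1) => p * v i)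
      (Matrix.of fun (_ : Fin 1) j => q * v j) (Matrix.of fun _ _ => d)).det
      = d * α - p * q * β := by
  -- Both sides are continuous in `d`, so the Schur complement formula for `d ≠ 0` suffices.
  have hcont : Continuous fun d : ℂ =>
      (Matrix.fromBlocks G (Matrix.of fun i (_ : Fin 1) => p * v i)
      (Matrix.of fun (_ : Fin 1) j => q * v j) (Matrix.of fun (_ _ : Fin 1) => d)).det := by
    refine Continuous.matrix_det ?_
    refine Continuous.matrix_fromBlocks continuous_const continuous_const continuous_const ?_
    exact continuous_pi fun _ => continuous_pi fun _ => continuous_id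
  refine congrFun (Continuous.ext_on (dense_compl_singleton (0 : ℂ)) hcont
    (g := fun d => d * α - p * q * β) (by fun_prop) ?_) d
  intro d hd
  have hd : d ≠ 0 := hd
  have hdet : (Matrix.of fun (_ _ : Fin 1) => d).det = d := by simp
  let : Invertible (Matrix.of fun (_ _ : Fin 1) => d) :=
    Matrix.invertibleOfIsUnitDet _ (by rw [hdet]; exact isUnit_iff_ne_zero.mpr hd)
  have hinv : ⅟(Matrix.of fun (_ _ : Fin 1) => d) = Matrix.of fun (_ _ : Fin 1) => d⁻¹ := by
    apply invOf_eq_right_inv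
    ext i j
    fin_cases i; fin_cases j
    simp [Matrix.mul_apply, hd]
  have key := h (-(p * q / d))
  have hS : G - (Matrix.of fun i (_ : Fin 1) => p * v i) * ⅟(Matrix.of fun (_ _ : Fin 1) => d) *
      (Matrix.of fun (_ : Fin 1) j => q * v j)
      = G + Matrix.of fun i j => (-(p * q / d)) * v i * v j := by
    rw [hinv]
    ext i j
    simp [Matrix.mul_apply]
    field_simp
    ring
  simp only
  rw [Matrix.det_fromBlocks₂₂, hS, key, hdet]
  field_simp
  ring

lemma det_rankOneFamily (a x L : ℕ → ℂ) (m : ℕ) (s : ℂ) :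
    (rankOneFamily a x L m s).det
      = (detCoeffs a x L m).1 - 2 * s * (detCoeffs a x L m).2 := by
  induction m generalizing s with
  | zero => simp [detCoeffs]
  | succ m ih =>
    have hb := det_bordered (rankOneFamily a x L m s) (fun i => a i)
      ((detCoeffs a x L m).1 - 2 * s * (detCoeffs a x L m).2)
      (-2 * (detCoeffs a x L m).2) (by
        intro t
        have : (rankOneFamily a x L m s + Matrix.of fun i j : Fin m => t * a i * a j)
            = rankOneFamily a x L m (s + t) := by
          ext i j
          simp only [rankOneFamily, Matrix.add_apply, Matrix.of_apply]
          ring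
        rw [this, ih]
        ring)
      (s * a m - x m / 2) (s * a m + x m / 2) (L m + s * a m ^ 2)
    rw [← Matrix.det_submatrix_equiv_self (finSumFinEquiv (m := m) (n := 1))]
    have hM : (rankOneFamily a x L (m + 1) s).submatrix (finSumFinEquiv (m := m) (n := 1))
        (finSumFinEquiv (m := m) (n := 1)) =
        Matrix.fromBlocks (rankOneFamily a x L m s)
          (Matrix.of fun i (_ : Fin 1) => (s * a m - x m / 2) * a i)
          (Matrix.of fun (_ : Fin 1) j => (s * a m + x m / 2) * a j)
          (Matrix.of fun _ _ => L m + s * a m ^ 2) := by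
      ext i j
      rcases i with i | i <;> rcases j with j | j
      · simp [rankOneFamily, Fin.ext_iff, Fin.lt_def, -Fin.val_fin_lt]
      · have h1 : (i : ℕ) ≠ m := i.2.ne
        simp [rankOneFamily, Fin.ext_iff, Fin.lt_def, h1]
        ring
      · have h1 : m ≠ (j : ℕ) := j.2.ne'
        have h2 : ¬ m < (j : ℕ) := by omega
        simp [rankOneFamily, Fin.ext_iff, Fin.lt_def, h1, h2]
        ring
      · simp [rankOneFamily, Fin.ext_iff]
        ring
    rw [hM, hb]
    simp only [detCoeffs]
    ring

/-- The contribution of the subset `s` of `{1, …, m}` to the expansion of the determinant of size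
`m`, without the global sign `(-1)^⌊m/2⌋`. -/
noncomputable def subsetTerm (n : ℕ) (ξ : ℕ → ℝ) (l : ℂ) (m : ℕ) (s : Finset ℕ) : ℂ :=
  l ^ (m - s.card) / 2 ^ s.card *
    (((-1 : ℝ) ^ (∑ i ∈ s, i) *
      Real.exp (2 * n * ∑ i ∈ s, (-1 : ℝ) ^ ((s.filter (· ≤ i)).card) * ξ i) : ℝ) : ℂ)

/-- The sum of `subsetTerm` over the subsets of `{1, …, m}` whose cardinality has the parity
of `r`. -/
noncomputable def parityPart (n : ℕ) (ξ : ℕ → ℝ) (l : ℂ) (r m : ℕ) : ℂ :=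
  ∑ s ∈ (Finset.Icc 1 m).powerset,
    if (Even (s.card + r)) then subsetTerm n ξ l m s else 0

lemma subsetTerm_succ (n : ℕ) (ξ : ℕ → ℝ) (l : ℂ) (m : ℕ) {s : Finset ℕ}
    (hs : s ⊆ Finset.Icc 1 m) : subsetTerm n ξ l (m + 1) s = l * subsetTerm n ξ l m s := by
  have hc : s.card ≤ m := by simpa using Finset.card_le_card hs
  unfold subsetTerm
  rw [Nat.sub_add_comm hc, pow_succ]
  ring

/-- Adjoining the largest index `m + 1` leaves the positions of the elements of `s` unchanged and
gives the new element position `s.card + 1`. -/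
lemma subsetTerm_insert (n : ℕ) (ξ : ℕ → ℝ) (l : ℂ) (m : ℕ) {s : Finset ℕ}
    (hs : s ⊆ Finset.Icc 1 m) :
    subsetTerm n ξ l (m + 1) (insert (m + 1) s) =
      (-1) ^ (m + 1) / 2 * (Real.exp (2 * n * ((-1) ^ (s.card + 1) * ξ (m + 1))) : ℂ) *
        subsetTerm n ξ l m s := by
  have hle : ∀ i ∈ s, i ≤ m := fun i hi => (Finset.mem_Icc.mp (hs hi)).2
  have hnot : m + 1 ∉ s := fun h => by have := hle _ h; omega
  have hsum : ∑ i ∈ insert (m + 1) s,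
      (-1 : ℝ) ^ (((insert (m + 1) s).filter (· ≤ i)).card) * ξ i
      = (-1) ^ (s.card + 1) * ξ (m + 1) +
        ∑ i ∈ s, (-1 : ℝ) ^ ((s.filter (· ≤ i)).card) * ξ i := by
    rw [Finset.sum_insert hnot]
    congr 1
    · rw [Finset.filter_true_of_mem, Finset.card_insert_of_notMem hnot]
      intro i hi
      rcases Finset.mem_insert.mp hi with rfl | hi
      · exact le_rfl
      · exact (hle i hi).trans (Nat.le_succ m)
    · refine Finset.sum_congr rfl fun i hi => ?_
      rw [Finset.filter_insert, if_neg (by have := hle i hi; omega)]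
  unfold subsetTerm
  rw [hsum, Finset.sum_insert hnot, Finset.card_insert_of_notMem hnot, Nat.add_sub_add_right,
    mul_add, Real.exp_add, pow_add, pow_succ (2 : ℂ)]
  push_cast
  ring

/-- Splitting by membership of `m + 1`; the new index has even position, hence the sign `+` in the
exponential, exactly when the resulting subset has even cardinality. -/
lemma parityPart_succ (n : ℕ) (ξ : ℕ → ℝ) (l : ℂ) (r m : ℕ) :
    parityPart n ξ l r (m + 1) = l * parityPart n ξ l r m +
      (-1) ^ (m + 1) / 2 * (Real.exp (2 * n * ((-1) ^ r * ξ (m + 1))) : ℂ) *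
        parityPart n ξ l (r + 1) m := by
  have hI : Finset.Icc 1 (m + 1) = insert (m + 1) (Finset.Icc 1 m) := by
    ext i; simp only [Finset.mem_Icc, Finset.mem_insert]; omega
  unfold parityPart
  rw [hI, Finset.sum_powerset_insert (by simp), Finset.mul_sum, Finset.mul_sum]
  congr 1
  · refine Finset.sum_congr rfl fun s hs => ?_
    rw [subsetTerm_succ n ξ l m (Finset.mem_powerset.mp hs), mul_ite, mul_zero]
  · refine Finset.sum_congr rfl fun s hs => ?_
    have hs := Finset.mem_powerset.mp hs
    have hnot : m + 1 ∉ s := fun h => by have := (Finset.mem_Icc.mp (hs h)).2; omega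
    rw [subsetTerm_insert n ξ l m hs, Finset.card_insert_of_notMem hnot, mul_ite, mul_zero,
      show s.card + 1 + r = s.card + (r + 1) by ring]
    split_ifs with h
    · have : (-1 : ℝ) ^ (s.card + 1) = (-1) ^ r := by
        rw [neg_one_pow_congr]
        have := h
        simp only [Nat.even_add_one, Nat.even_add] at this ⊢
        tauto
      rw [this]
    · rfl

lemma parityPart_add_two (n : ℕ) (ξ : ℕ → ℝ) (l : ℂ) (r m : ℕ) :
    parityPart n ξ l (r + 2) m = parityPart n ξ l r m := by
  unfold parityPart
  refine Finset.sum_congr rfl fun s _ => ?_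
  congr 1
  simp [← add_assoc, Nat.even_add]

lemma neg_one_pow_half_succ (m : ℕ) :
    (-1 : ℂ) ^ ((m + 1) / 2) = (-1) ^ (m / 2) * (-1) ^ m := by
  rcases Nat.even_or_odd' m with ⟨k, rfl | rfl⟩
  · rw [show (2 * k + 1) / 2 = k by omega, show 2 * k / 2 = k by omega]
    simp
  · rw [show (2 * k + 1 + 1) / 2 = k + 1 by omega, show (2 * k + 1) / 2 = k by omega]
    simp [pow_succ]

/-- The determinant coefficients for `a_i = e^{-nξ_i}`, `x_i = e^{nξ_i}` are the even and the odd
part of the subset sum. -/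
lemma detCoeffs_eq (n : ℕ) (ξ : ℕ → ℝ) (l : ℂ) (m : ℕ) :
    detCoeffs (fun i => (Real.exp (-(n * ξ (i + 1))) : ℂ)) (fun i => (Real.exp (n * ξ (i + 1)) : ℂ))
      (fun i => (-1) ^ i * l) m
      = ((-1) ^ (m / 2) * parityPart n ξ l 0 m, (-1) ^ (m / 2) * parityPart n ξ l 1 m) := by
  induction m with
  | zero => simp [detCoeffs, parityPart, subsetTerm]
  | succ m ih =>
    have hx : ∀ t : ℝ, ((Real.exp t : ℝ) : ℂ) ^ 2 = ((Real.exp (2 * t) : ℝ) : ℂ) := by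
      intro t
      rw [← Complex.ofReal_pow, ← Real.exp_nat_mul]
      norm_num
    simp only [detCoeffs, ih, hx, parityPart_succ, neg_one_pow_half_succ]
    have h2 := parityPart_add_two n ξ l 0 m
    simp only [zero_add] at h2
    have e0 : (2 : ℝ) * n * ((-1) ^ 0 * ξ (m + 1)) = 2 * (n * ξ (m + 1)) := by ring
    have e1 : (2 : ℝ) * n * ((-1) ^ 1 * ξ (m + 1)) = 2 * (-(n * ξ (m + 1))) := by ring
    have hsq : ((-1 : ℂ) ^ m) * (-1) ^ m = 1 := by rw [← mul_pow]; simp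
    rw [zero_add, show (1 + 1 : ℕ) = 2 from rfl, h2, e0, e1, pow_succ (-1 : ℂ) m]
    refine Prod.ext ?_ ?_
    · simp only
      linear_combination (-1 : ℂ) ^ (m / 2) * ((Real.exp (2 * (n * ξ (m + 1))) : ℝ) : ℂ) / 2 *
        parityPart n ξ l 1 m * hsq
    · simp only
      linear_combination (-1 : ℂ) ^ (m / 2) * ((Real.exp (2 * (-(n * ξ (m + 1)))) : ℝ) : ℂ) / 2 *
        parityPart n ξ l 0 m * hsq

lemma parityPart_zero_add_one (n : ℕ) (ξ : ℕ → ℝ) (l : ℂ) (N : ℕ) :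
    parityPart n ξ l 0 N + parityPart n ξ l 1 N =
      ∑ k ∈ Finset.range (N + 1), l ^ (N - k) / 2 ^ k * ((sgnExpSum n ξ 1 N k : ℝ) : ℂ) := by
  have h : parityPart n ξ l 0 N + parityPart n ξ l 1 N =
      ∑ s ∈ (Finset.Icc 1 N).powerset, subsetTerm n ξ l N s := by
    unfold parityPart
    rw [← Finset.sum_add_distrib]
    refine Finset.sum_congr rfl fun s _ => ?_
    by_cases hs : Even s.card <;> simp [Nat.even_add_one, hs]
  rw [h, Finset.sum_powerset, Nat.card_Icc, Nat.add_sub_cancel]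
  refine Finset.sum_congr rfl fun k _ => ?_
  unfold sgnExpSum
  rw [Complex.ofReal_sum, Finset.mul_sum]
  refine Finset.sum_congr rfl fun s hs => ?_
  unfold subsetTerm
  rw [(Finset.mem_powersetCard.mp hs).2]

lemma Mc_eq_rankOneFamily (n N : ℕ) (ξ : ℕ → ℝ) (l : ℂ) :
    Mc n N ξ l = rankOneFamily (fun i => (Real.exp (-(n * ξ (i + 1))) : ℂ))
      (fun i => (Real.exp (n * ξ (i + 1)) : ℂ)) (fun i => (-1) ^ i * l) N (-1 / 2) := by
  ext i j
  unfold Mc rankOneFamily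
  split_ifs with h1 h2
  · subst h1
    have : Real.exp (-(2 * n * ξ ((i : ℕ) + 1)))
        = Real.exp (-(n * ξ ((i : ℕ) + 1))) * Real.exp (-(n * ξ ((i : ℕ) + 1))) := by
      rw [← Real.exp_add]; congr 1; ring
    rw [this]
    push_cast
    ring
  · rw [Real.cosh_eq]
    push_cast
    ring
  · rw [Real.sinh_eq]
    push_cast
    ring

/-- Explicit formula for the determinant of the `n`-order even GPM. -/
theorem det_Mc_eq (N n : ℕ) (hN : 0 < N) (hn : 0 < n) (ξ : ℕ → ℝ)
    (hξ : ∀ i j, 1 ≤ i → i < j → j ≤ N → ξ j < ξ i) (hpos : 0 < ξ N) (l : ℂ) :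
    (Mc n N ξ l).det =
      (-1 : ℂ) ^ (N / 2) *
        ∑ k ∈ Finset.range (N + 1),
          l ^ (N - k) / 2 ^ k * ((sgnExpSum n ξ 1 N k : ℝ) : ℂ) := by
  rw [Mc_eq_rankOneFamily, det_rankOneFamily, detCoeffs_eq, ← parityPart_zero_add_one]
  ring
end

section
/- For every 1 ≤ i ≤ N and every λ ∈ ℂ, with λ_p = (−1)^{p−1} λ, the determinant of the trailing submatrix M_{i:N,c} equals ε_{N,i} · Σ_{k=0}^{N+1−i} (λ^{N+1−i−k} / 2^k) · ( Σ_{i ≤ i_1 < ⋯ < i_k ≤ N} (−1)^{i_1+⋯+i_k} · exp(2 n Σ_{l=1}^{k} (−1)^l ξ_{i_l}) ), where ε_{N,i} = (−1)^{⌊(N+1−i)/2⌋} if N is odd and ε_{N,i} = (−1)^{i−1} (−1)^{⌊(N+1−i)/2⌋} if N is even; here for k = 0 the inner sum is 1. -/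
open Finset

/-- The trailing submatrix `M_{i:N,c}` with rows and columns indexed by
`p, q ∈ {i, …, N}` (realized as `p = i + a` for `a : Fin (N+1−i)`):
the `(p,p)` entry is `(−1)^{p−1} λ − (1/2) e^{−2nξ_p}`, the `(p,q)` entry for
`p < q` is `−cosh(nξ_q) e^{−nξ_p}`, and for `p > q` it is `sinh(nξ_p) e^{−nξ_q}`. -/
noncomputable def McSub (n N : ℕ) (ξ : ℕ → ℝ) (l : ℂ) (i : ℕ) :
    Matrix (Fin (N + 1 - i)) (Fin (N + 1 - i)) ℂ :=
  fun a b =>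
    if a = b then
      (-1 : ℂ) ^ (i + (a : ℕ) - 1) * l -
        ((Real.exp (-(2 * n * ξ (i + (a : ℕ)))) / 2 : ℝ) : ℂ)
    else if a < b then
      -(((Real.cosh (n * ξ (i + (b : ℕ))) * Real.exp (-(n * ξ (i + (a : ℕ))))) : ℝ) : ℂ)
    else
      (((Real.sinh (n * ξ (i + (a : ℕ))) * Real.exp (-(n * ξ (i + (b : ℕ))))) : ℝ) : ℂ)

/-- Expansion of a determinant whose first row and first column vanish past the second entry. -/
lemma det_of_border {m : ℕ} (M : Matrix (Fin (m + 2)) (Fin (m + 2)) ℂ)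
    (hr : ∀ k : Fin m, M 0 k.succ.succ = 0) (hc : ∀ k : Fin m, M k.succ.succ 0 = 0) :
    M.det = M 0 0 * (M.submatrix Fin.succ Fin.succ).det
      - M 0 1 * M 1 0 * (M.submatrix (fun k : Fin m => k.succ.succ)
          (fun k : Fin m => k.succ.succ)).det := by
  have h1 : (M.submatrix Fin.succ (Fin.succAbove 1)).det =
      M 1 0 * (M.submatrix (fun k : Fin m => k.succ.succ)
          (fun k : Fin m => k.succ.succ)).det := by
    rw [Matrix.det_succ_column_zero, Fin.sum_univ_succ]
    rw [Finset.sum_eq_zero]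
    · simp only [Matrix.submatrix_apply, Matrix.submatrix_submatrix]
      simp
      left
      congr 1
    · intro k _
      simp [hc]
  rw [Matrix.det_succ_row_zero, Fin.sum_univ_succ, Fin.sum_univ_succ, Finset.sum_eq_zero]
  · have : (Fin.succ (0 : Fin (m + 1))) = 1 := rfl
    rw [this, h1]
    simp
    ring
  · intro k _
    simp [hr]

/-- The rescaled trailing block of size `m` starting at index `j`; `c p` plays the role of `λ_p`
and `z p` that of `e^{2nξ_p}`. -/
noncomputable def scaledMat (c z : ℕ → ℂ) (m j : ℕ) : Matrix (Fin m) (Fin m) ℂ :=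
  fun a b =>
    if a = b then c (j + a) * z (j + a) - 1 / 2
    else if a < b then -(z (j + b) + 1) / 2
    else (z (j + a) - 1) / 2

lemma scaledMat_succ (c z : ℕ → ℂ) (m j : ℕ) (a b : Fin m) :
    scaledMat c z (m + 1) j a.succ b.succ = scaledMat c z m (j + 1) a b := by
  have h (k : Fin m) : j + (k.succ : ℕ) = j + 1 + k := by simp; ring
  simp [scaledMat, ← h]

/-- The three-term recursion between determinants of nested trailing blocks. -/
lemma det_scaledMat_rec (c z : ℕ → ℂ) (m j : ℕ) :
    (scaledMat c z (m + 2) j).det =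
      (c j * z j + c (j + 1) * z (j + 1)) * (scaledMat c z (m + 1) (j + 1)).det
      + (1 / 4 - c (j + 1) ^ 2) * z (j + 1) ^ 2 * (scaledMat c z m (j + 2)).det := by
  set B := scaledMat c z (m + 2) j with hB
  -- `R` is `B` after the row operation, `C` after the column operation as well.
  let v : Fin (m + 2) → ℂ := fun a => if a = 0 then -1 else 0
  let R : Matrix (Fin (m + 2)) (Fin (m + 2)) ℂ := fun a b => B a b + v a * B 1 b
  let C : Matrix (Fin (m + 2)) (Fin (m + 2)) ℂ := fun a b => R a b + v b * R a 1
  have hRdet : R.det = B.det :=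
    Matrix.det_eq_of_forall_row_eq_smul_add_const v 1 (by simp [v]) (fun _ _ => rfl)
  have hCdet : C.det = R.det := by
    rw [← Matrix.det_transpose C, ← Matrix.det_transpose R]
    exact Matrix.det_eq_of_forall_row_eq_smul_add_const v 1 (by simp [v]) (fun _ _ => rfl)
  have hss : ∀ a b : Fin (m + 1), C a.succ b.succ = scaledMat c z (m + 1) (j + 1) a b := by
    intro a b
    rw [← scaledMat_succ]
    simp [C, R, v, hB]
  have h1lt : ∀ k : Fin m, (1 : Fin (m + 2)) < k.succ.succ := fun k => by
    simp [Fin.lt_def]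
  have hr : ∀ k : Fin m, C 0 k.succ.succ = 0 := by
    intro k
    have h0 : (0 : Fin (m + 2)) ≠ k.succ.succ := (Fin.succ_ne_zero _).symm
    simp [C, R, v, hB, scaledMat, h1lt, (h1lt k).ne, h0]
  have hc : ∀ k : Fin m, C k.succ.succ 0 = 0 := by
    intro k
    simp [C, R, v, hB, scaledMat, (h1lt k).ne']
  have h00 : C 0 0 = c j * z j + c (j + 1) * z (j + 1) := by
    simp [C, R, v, hB, scaledMat]
    ring
  have h01 : C 0 1 = -(c (j + 1) + 1 / 2) * z (j + 1) := by
    simp [C, R, v, hB, scaledMat]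
    ring
  have h10 : C 1 0 = (1 / 2 - c (j + 1)) * z (j + 1) := by
    simp [C, R, v, hB, scaledMat]
    ring
  have hs1 : C.submatrix Fin.succ Fin.succ = scaledMat c z (m + 1) (j + 1) := by
    ext a b; exact hss a b
  have hs2 : C.submatrix (fun k : Fin m => k.succ.succ) (fun k : Fin m => k.succ.succ)
      = scaledMat c z m (j + 2) := by
    ext a b
    simp only [Matrix.submatrix_apply]
    rw [hss, scaledMat_succ]
  rw [← hRdet, ← hCdet, det_of_border C hr hc, h00, h01, h10, hs1, hs2]
  ring

/-- The sum over all index sets `s ⊆ {j, …, j+m-1}` of the claim, with every exponent multiplied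
by `σ`: the values `σ = 1` and `σ = -1` give the sums `F_j` and `G_j`. -/
noncomputable def altSum (n : ℕ) (ξ : ℕ → ℝ) (l : ℂ) (σ : ℝ) (m j : ℕ) : ℂ :=
  ∑ s ∈ (Finset.Ico j (j + m)).powerset,
    l ^ (m - s.card) / 2 ^ s.card * ((-1 : ℂ) ^ (∑ i ∈ s, i) *
      ((Real.exp (σ * (2 * n * ∑ i ∈ s, (-1 : ℝ) ^ ((s.filter (· ≤ i)).card) * ξ i)) : ℝ) : ℂ))

/-- Adding a new smallest index shifts all positions by one, hence flips every sign. -/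
lemma signed_sum_insert (ξ : ℕ → ℝ) (j : ℕ) (s : Finset ℕ) (hs : ∀ i ∈ s, j < i) :
    ∑ i ∈ insert j s, (-1 : ℝ) ^ (((insert j s).filter (· ≤ i)).card) * ξ i =
      -ξ j - ∑ i ∈ s, (-1 : ℝ) ^ ((s.filter (· ≤ i)).card) * ξ i := by
  have hj : j ∉ s := fun h => (hs j h).false
  have hf : s.filter (· ≤ j) = ∅ := by
    ext i
    simp only [mem_filter, notMem_empty, iff_false, not_and, not_le]
    exact hs i
  rw [Finset.sum_insert hj, Finset.filter_insert, if_pos le_rfl, hf, sub_eq_add_neg,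
    ← Finset.sum_neg_distrib]
  congr 1
  · simp
  · refine Finset.sum_congr rfl fun i hi => ?_
    rw [Finset.filter_insert, if_pos (hs i hi).le, Finset.card_insert_of_notMem (by simp [hj]),
      pow_succ]
    ring

lemma altSum_succ (n : ℕ) (ξ : ℕ → ℝ) (l : ℂ) (σ : ℝ) (m j : ℕ) :
    altSum n ξ l σ (m + 1) j = l * altSum n ξ l σ m (j + 1) +
      1 / 2 * (-1 : ℂ) ^ j * ((Real.exp (-σ * (2 * n * ξ j)) : ℝ) : ℂ)
        * altSum n ξ l (-σ) m (j + 1) := by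
  have hI : Finset.Ico j (j + (m + 1)) = insert j (Finset.Ico (j + 1) (j + 1 + m)) := by
    ext; simp; omega
  unfold altSum
  rw [hI, Finset.sum_powerset_insert (by simp), Finset.mul_sum, Finset.mul_sum]
  congr 1
  · refine Finset.sum_congr rfl fun s hs => ?_
    have hc : s.card ≤ m := by
      simpa using Finset.card_le_card (Finset.mem_powerset.1 hs)
    rw [show m + 1 - s.card = (m - s.card) + 1 by omega, pow_succ]
    ring
  · refine Finset.sum_congr rfl fun s hs => ?_
    have hlt : ∀ i ∈ s, j < i := fun i hi => by
      have := Finset.mem_Ico.1 (Finset.mem_powerset.1 hs hi)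
      omega
    have hj : j ∉ s := fun h => (hlt j h).false
    rw [signed_sum_insert ξ j s hlt, Finset.card_insert_of_notMem hj, Finset.sum_insert hj,
      Nat.add_sub_add_right, pow_succ, pow_add]
    have he : ∀ S : ℝ, Real.exp (σ * (2 * n * (-ξ j - S))) =
        Real.exp (-σ * (2 * n * ξ j)) * Real.exp (-σ * (2 * n * S)) := fun S => by
      rw [← Real.exp_add]; congr 1; ring
    rw [he]
    push_cast
    ring

lemma altSum_zero (n : ℕ) (ξ : ℕ → ℝ) (l : ℂ) (σ : ℝ) (j : ℕ) : altSum n ξ l σ 0 j = 1 := by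
  simp [altSum]

/-- The determinant of the rescaled block; `-(-1)^p` stands for `(-1)^{p-1}`. -/
lemma det_scaledMat_eq (n : ℕ) (ξ : ℕ → ℝ) (l : ℂ) (m : ℕ) : ∀ j : ℕ,
    (scaledMat (fun p => -(-1) ^ p * l)
      (fun p => ((Real.exp (2 * n * ξ p) : ℝ) : ℂ)) m j).det =
      (∏ a ∈ Finset.range m, -(-1 : ℂ) ^ (j + a)) *
      (∏ a ∈ Finset.range m, ((Real.exp (2 * n * ξ (j + a)) : ℝ) : ℂ)) *
      altSum n ξ l 1 m j := by
  have hinv : ∀ j, ((Real.exp (-1 * (2 * n * ξ j)) : ℝ) : ℂ) =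
      ((Real.exp (2 * n * ξ j) : ℝ) : ℂ)⁻¹ := fun j => by
    rw [neg_one_mul, Real.exp_neg]; push_cast; rfl
  have hz : ∀ j, ((Real.exp (2 * n * ξ j) : ℝ) : ℂ) ≠ 0 := fun j => by
    exact_mod_cast (Real.exp_pos _).ne'
  have hsq : ∀ j : ℕ, ((-1 : ℂ) ^ j) ^ 2 = 1 := fun j => by
    rw [← pow_mul, mul_comm, pow_mul]; simp
  induction m using Nat.twoStepInduction with
  | zero => intro j; simp [altSum_zero]
  | one =>
    intro j
    rw [altSum_succ, altSum_zero, altSum_zero, hinv]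
    simp only [Matrix.det_fin_one, scaledMat, Finset.prod_range_one, if_true, Fin.val_zero,
      add_zero]
    have h1 := hsq j
    have h2 := hz j
    field_simp
    linear_combination (1 : ℂ) * h1
  | more m ih0 ih1 =>
    intro j
    have hF1 := altSum_succ n ξ l 1 (m + 1) j
    have hF2 := altSum_succ n ξ l 1 m (j + 1)
    have hG2 := altSum_succ n ξ l (-1) m (j + 1)
    rw [hinv] at hF1 hF2
    rw [neg_neg, one_mul] at hG2
    rw [det_scaledMat_rec, ih0, ih1]
    rw [hF1, hG2, hF2]
    have hp2 : ∀ f : ℕ → ℂ, ∏ a ∈ Finset.range (m + 2), f (j + a) =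
        (∏ a ∈ Finset.range m, f (j + 2 + a)) * f (j + 1) * f j := fun f => by
      rw [Finset.prod_range_succ', Finset.prod_range_succ']
      congr 2
      exact Finset.prod_congr rfl fun a _ => congrArg f (by ring)
    have hp1 : ∀ f : ℕ → ℂ, ∏ a ∈ Finset.range (m + 1), f (j + 1 + a) =
        (∏ a ∈ Finset.range m, f (j + 2 + a)) * f (j + 1) := fun f => by
      rw [Finset.prod_range_succ']
      congr 1
      exact Finset.prod_congr rfl fun a _ => congrArg f (by ring)
    rw [hp2 fun p => -(-1 : ℂ) ^ p, hp1 fun p => -(-1 : ℂ) ^ p,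
      hp2 fun p => ((Real.exp (2 * n * ξ p) : ℝ) : ℂ),
      hp1 fun p => ((Real.exp (2 * n * ξ p) : ℝ) : ℂ)]
    simp only [show j + 1 + 1 = j + 2 from rfl]
    have h1 := hsq j
    have h2 := hz j
    have h3 := hz (j + 1)
    -- What remains is a polynomial identity in the quantities below, modulo `s ^ 2 = 1`.
    generalize (∏ a ∈ Finset.range m, -(-1 : ℂ) ^ (j + 2 + a)) = P
    generalize (∏ a ∈ Finset.range m, ((Real.exp (2 * n * ξ (j + 2 + a)) : ℝ) : ℂ)) = Q
    generalize altSum n ξ l 1 m (j + 2) = F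
    generalize altSum n ξ l (-1) m (j + 2) = G
    generalize ((Real.exp (2 * n * ξ j) : ℝ) : ℂ) = z0 at *
    generalize ((Real.exp (2 * n * ξ (j + 1)) : ℝ) : ℂ) = z1 at *
    rw [pow_succ]
    generalize (-1 : ℂ) ^ j = s at *
    field_simp
    linear_combination (-4 * P * Q * z1 ^ 2 * F * (s ^ 2 + 1)) * h1

/-- The product of the signs `(-1)^{p-1}` over `p = j, …, N` is `ε_{N,j}`, where `N + 1 = j + m`. -/
lemma prod_sign (N m : ℕ) : ∀ j : ℕ, 1 ≤ j → N + 1 = j + m →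
    (∏ a ∈ Finset.range m, -(-1 : ℂ) ^ (j + a)) =
      if Odd N then (-1 : ℂ) ^ (m / 2) else (-1 : ℂ) ^ (j - 1) * (-1 : ℂ) ^ (m / 2) := by
  induction m using Nat.twoStepInduction with
  | zero =>
    intro j hj h
    obtain rfl : N = j - 1 := by omega
    split_ifs with ho
    · simp
    · simp [(Nat.not_odd_iff_even.1 ho).neg_one_pow]
  | one =>
    intro j hj h
    obtain rfl : N = j := by omega
    obtain ⟨k, rfl⟩ : ∃ k, N = k + 1 := ⟨N - 1, by omega⟩
    split_ifs with ho
    · simp [ho.neg_one_pow]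
    · simp [pow_succ]
  | more m ih _ =>
    intro j hj h
    have h2 := ih (j + 2) (by omega) (by omega)
    obtain ⟨k, rfl⟩ : ∃ k, j = k + 1 := ⟨j - 1, by omega⟩
    rw [Finset.prod_range_succ', Finset.prod_range_succ']
    have r : ∀ a, k + 1 + (a + 1 + 1) = k + 1 + 2 + a := fun a => by ring
    rw [Finset.prod_congr rfl fun a _ => by rw [r a], h2, show (m + 2) / 2 = m / 2 + 1 by omega]
    have h1 : ((-1 : ℂ) ^ k) ^ 2 = 1 := by
      rw [← pow_mul, mul_comm, pow_mul]; simp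
    split_ifs
    · simp only [pow_succ, add_zero, zero_add]
      linear_combination (-(-1 : ℂ) ^ (m / 2)) * h1
    · simp only [pow_succ, add_zero, zero_add, Nat.add_sub_cancel,
        show k + 1 + 2 - 1 = k + 2 by omega]
      linear_combination (-(-1 : ℂ) ^ (m / 2) * (-1) ^ k) * h1

lemma altSum_eq_sgnExpSum (n N : ℕ) (ξ : ℕ → ℝ) (l : ℂ) (i : ℕ) (hiN : i ≤ N) :
    altSum n ξ l 1 (N + 1 - i) i = ∑ k ∈ Finset.range (N + 1 - i + 1),
          l ^ (N + 1 - i - k) / 2 ^ k * ((sgnExpSum n ξ i N k : ℝ) : ℂ) := by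
  have hI : Finset.Ico i (i + (N + 1 - i)) = Finset.Icc i N := by
    ext; simp; omega
  unfold altSum
  rw [hI, Finset.sum_powerset, Nat.card_Icc]
  refine Finset.sum_congr rfl fun k _ => ?_
  rw [sgnExpSum, Complex.ofReal_sum, Finset.mul_sum]
  refine Finset.sum_congr rfl fun s hs => ?_
  rw [(Finset.mem_powersetCard.1 hs).2]
  push_cast
  simp

/-- Row and column scaling by `e^{nξ_p}` turns `M_{i:N,c}` into `scaledMat`. -/
lemma det_scaledMat_eq_det_McSub (n N : ℕ) (ξ : ℕ → ℝ) (l : ℂ) (i : ℕ) (hi : 1 ≤ i) :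
    (scaledMat (fun p => -(-1) ^ p * l)
      (fun p => ((Real.exp (2 * n * ξ p) : ℝ) : ℂ)) (N + 1 - i) i).det =
    (∏ a ∈ Finset.range (N + 1 - i), ((Real.exp (2 * n * ξ (i + a)) : ℝ) : ℂ)) *
      (McSub n N ξ l i).det := by
  let x : Fin (N + 1 - i) → ℂ := fun a => ((Real.exp (n * ξ (i + a)) : ℝ) : ℂ)
  have key : scaledMat (fun p => -(-1) ^ p * l)
      (fun p => ((Real.exp (2 * n * ξ p) : ℝ) : ℂ)) (N + 1 - i) i =
      Matrix.of fun a b => x a * (Matrix.of fun a b => x b * McSub n N ξ l i a b) a b := by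
    have hz : ∀ p, ((Real.exp (2 * n * ξ p) : ℝ) : ℂ) = ((Real.exp (n * ξ p) : ℝ) : ℂ) ^ 2 := by
      intro p
      rw [← Complex.ofReal_pow, ← Real.exp_nat_mul]
      congr 2; push_cast; ring
    have hzi : ∀ p, Real.exp (-(2 * n * ξ p)) = (Real.exp (n * ξ p) ^ 2)⁻¹ := by
      intro p
      rw [← Real.exp_nat_mul, ← Real.exp_neg]
      congr 1; push_cast; ring
    have hx : ∀ p, ((Real.exp (n * ξ p) : ℝ) : ℂ) ≠ 0 := fun j => by
      exact_mod_cast (Real.exp_pos _).ne'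
    ext a b
    have ha := hx (i + a)
    have hb := hx (i + b)
    simp only [scaledMat, McSub, Matrix.of_apply, x, hz, hzi, Real.cosh_eq, Real.sinh_eq,
      Real.exp_neg, Complex.ofReal_mul, Complex.ofReal_inv, Complex.ofReal_div,
      Complex.ofReal_add, Complex.ofReal_sub, Complex.ofReal_pow, Complex.ofReal_ofNat]
    split_ifs with h1 h2
    · subst h1
      have hs : (-1 : ℂ) ^ (i + (a : ℕ)) = -(-1) ^ (i + (a : ℕ) - 1) := by
        conv_lhs => rw [show i + (a : ℕ) = (i + (a : ℕ) - 1) + 1 by omega, pow_succ]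
        ring
      rw [hs]
      field_simp
    · field_simp
    · field_simp
  rw [key, Matrix.det_mul_column, Matrix.det_mul_row, ← mul_assoc, ← Finset.prod_mul_distrib,
    ← Fin.prod_univ_eq_prod_range (fun a => ((Real.exp (2 * n * ξ (i + a)) : ℝ) : ℂ))]
  congr 1
  refine Finset.prod_congr rfl fun a _ => ?_
  simp only [x]
  rw [← Complex.ofReal_mul, ← Real.exp_add]
  congr 2; ring

/-- Explicit formula for the determinant of the trailing submatrix `M_{i:N,c}`. -/
theorem det_McSub_eq (N n : ℕ) (hN : 0 < N) (hn : 0 < n) (ξ : ℕ → ℝ)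
    (hξ : ∀ i j, 1 ≤ i → i < j → j ≤ N → ξ j < ξ i) (hpos : 0 < ξ N)
    (i : ℕ) (hi1 : 1 ≤ i) (hiN : i ≤ N) (l : ℂ) :
    (McSub n N ξ l i).det =
      (if Odd N then (-1 : ℂ) ^ ((N + 1 - i) / 2)
        else (-1 : ℂ) ^ (i - 1) * (-1 : ℂ) ^ ((N + 1 - i) / 2)) *
        ∑ k ∈ Finset.range (N + 1 - i + 1),
          l ^ (N + 1 - i - k) / 2 ^ k * ((sgnExpSum n ξ i N k : ℝ) : ℂ) := by
  have h1 := det_scaledMat_eq_det_McSub n N ξ l i hi1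
  rw [det_scaledMat_eq] at h1
  have hP : (∏ a ∈ Finset.range (N + 1 - i), ((Real.exp (2 * n * ξ (i + a)) : ℝ) : ℂ)) ≠ 0 :=
    Finset.prod_ne_zero_iff.2 fun a _ => by exact_mod_cast (Real.exp_pos _).ne'
  rw [← prod_sign N (N + 1 - i) i hi1 (by omega), ← altSum_eq_sgnExpSum n N ξ l i hiN]
  refine mul_left_cancel₀ hP ?_
  rw [← h1]
  ring
end

section
/- Every complex root z of f_N^+ is real and lies in the interval [−1/2, 1/2], i.e. Im z = 0 and −1/2 ≤ Re z ≤ 1/2; the same holds for every complex root of f_N^−. In particular, since f_N^+ and f_N^− are monic polynomials of degree N, each of them has exactly N real roots in [−1/2, 1/2] counted with multiplicity. -/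
/-!
Put `a i = exp (2 n ξ i)` and `t = 1 / (e z)`. Up to the factor `z ^ N`, the value of `fPoly` at
`z ≠ 0` is `E + O`, where `E` and `O` are the sums of `t ^ |s|` times the weight of `s` over the
subsets `s` of `{1, …, N}` of even and odd cardinality (`evenSum`, `oddSum`). Adding the index
`m + 1` to the ground set is the linear recursion
`E' = E + ε t a O`, `O' = O + ε t a⁻¹ E` with `ε = (-1) ^ (m + 1)`, `a = a (m + 1)`.

For a scale `b > 0` consider the ratio `q = (E - b O) / (E + b O)`. At the scale `b = a`, the
recursion multiplies `q` by `u ^ ε`, where `u = (1 - t) / (1 + t)`; lowering the scale, which is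
where the monotonicity of `ξ` enters, acts by `q ↦ (q + d) / (1 + d q)` with `0 ≤ d < 1`.
If `t` is not a real number of absolute value at least `1`, then `u` is off the closed negative
real axis, and this last map preserves the convex cone spanned by `1` and `u` (`cone_step`), as well
as the one spanned by `1` and `u⁻¹`. Multiplication by `u` and `u⁻¹` alternately exchanges the two
cones, so `q` remains in them and never becomes infinite (`ratio_mem_cone`). At the final scale
`b = 1` this says `E + O ≠ 0`, so a root `z` must have `t` real with `|t| ≥ 1`.
-/

open Finset Polynomial

/-- The polynomial `f_N^±(λ) = Σ_{k=0}^{N} (λ^{N−k} / e^k) · sgnExpSum k`,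
where `e = 2` gives `f_N^+` and `e = −2` gives `f_N^−`. -/
noncomputable def fPoly (n N : ℕ) (ξ : ℕ → ℝ) (e : ℝ) : Polynomial ℂ :=
  ∑ k ∈ Finset.range (N + 1),
    Polynomial.C (((sgnExpSum n ξ 1 N k : ℝ) : ℂ) / (e : ℂ) ^ k) * Polynomial.X ^ (N - k)

/-- The weight of a subset `s` in `sgnExpSum`. -/
noncomputable def wt (n : ℕ) (ξ : ℕ → ℝ) (s : Finset ℕ) : ℝ :=
  (-1 : ℝ) ^ (∑ i ∈ s, i) *
    Real.exp (2 * n * ∑ i ∈ s, (-1 : ℝ) ^ ((s.filter (· ≤ i)).card) * ξ i)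

/-- The part of `∑ s ⊆ {1, …, m}, wt s * t ^ |s|` coming from sets of even cardinality. -/
noncomputable def evenSum (n : ℕ) (ξ : ℕ → ℝ) (t : ℂ) (m : ℕ) : ℂ :=
  ∑ s ∈ (Finset.Icc 1 m).powerset, if Even s.card then (wt n ξ s : ℂ) * t ^ s.card else 0

/-- The part of `∑ s ⊆ {1, …, m}, wt s * t ^ |s|` coming from sets of odd cardinality. -/
noncomputable def oddSum (n : ℕ) (ξ : ℕ → ℝ) (t : ℂ) (m : ℕ) : ℂ :=
  ∑ s ∈ (Finset.Icc 1 m).powerset, if Even s.card then 0 else (wt n ξ s : ℂ) * t ^ s.card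

/-- A new largest element leaves the positions of the others unchanged and takes the last one. -/
lemma wt_insert (n : ℕ) (ξ : ℕ → ℝ) (m : ℕ) (s : Finset ℕ) (hs : s ⊆ Finset.Icc 1 m) :
    wt n ξ (insert (m + 1) s) =
      wt n ξ s * ((-1) ^ (m + 1) * Real.exp (2 * n * ((-1) ^ (s.card + 1) * ξ (m + 1)))) := by
  have hle : ∀ i ∈ s, i ≤ m := fun i hi => (Finset.mem_Icc.mp (hs hi)).2
  have hnot : m + 1 ∉ s := fun h => by have := hle _ h; omega
  have h1 : (insert (m + 1) s).filter (· ≤ m + 1) = insert (m + 1) s := by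
    apply Finset.filter_true_of_mem
    intro i hi
    rcases Finset.mem_insert.mp hi with rfl | hi
    · exact le_rfl
    · have := hle i hi; omega
  have h2 : ∀ i ∈ s, (insert (m + 1) s).filter (· ≤ i) = s.filter (· ≤ i) := by
    intro i hi
    have := hle i hi
    rw [Finset.filter_insert, if_neg (by omega)]
  have h3 : ∑ i ∈ s, (-1 : ℝ) ^ (((insert (m + 1) s).filter (· ≤ i)).card) * ξ i =
      ∑ i ∈ s, (-1 : ℝ) ^ ((s.filter (· ≤ i)).card) * ξ i :=
    Finset.sum_congr rfl fun i hi => by rw [h2 i hi]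
  unfold wt
  rw [Finset.sum_insert hnot, Finset.sum_insert hnot, h1, h3, Finset.card_insert_of_notMem hnot,
    mul_add, Real.exp_add, pow_add]
  ring

lemma Icc_succ_insert (m : ℕ) : Finset.Icc 1 (m + 1) = insert (m + 1) (Finset.Icc 1 m) := by
  ext i
  simp only [Finset.mem_Icc, Finset.mem_insert]
  omega

lemma evenSum_succ (n : ℕ) (ξ : ℕ → ℝ) (t : ℂ) (m : ℕ) :
    evenSum n ξ t (m + 1) = evenSum n ξ t m +
      (-1) ^ (m + 1) * t * (Real.exp (2 * n * ξ (m + 1)) : ℂ) * oddSum n ξ t m := by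
  have hnot : m + 1 ∉ Finset.Icc 1 m := by simp
  rw [evenSum, Icc_succ_insert, Finset.sum_powerset_insert hnot, ← evenSum, oddSum,
    Finset.mul_sum]
  congr 1
  refine Finset.sum_congr rfl fun s hs => ?_
  have hs := Finset.mem_powerset.mp hs
  rw [wt_insert n ξ m s hs, Finset.card_insert_of_notMem fun h => hnot (hs h)]
  by_cases h : Even s.card
  · simp [h, Nat.even_add_one]
  · have h' : Even (s.card + 1) := Nat.even_add_one.mpr h
    rw [if_pos h', if_neg h, h'.neg_one_pow]
    push_cast
    ring_nf

lemma oddSum_succ (n : ℕ) (ξ : ℕ → ℝ) (t : ℂ) (m : ℕ) :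
    (Real.exp (2 * n * ξ (m + 1)) : ℂ) * oddSum n ξ t (m + 1) =
      (Real.exp (2 * n * ξ (m + 1)) : ℂ) * oddSum n ξ t m +
        (-1) ^ (m + 1) * t * evenSum n ξ t m := by
  have hnot : m + 1 ∉ Finset.Icc 1 m := by simp
  rw [oddSum, Icc_succ_insert, Finset.sum_powerset_insert hnot, ← oddSum, evenSum,
    Finset.mul_sum, mul_add, Finset.mul_sum]
  congr 1
  refine Finset.sum_congr rfl fun s hs => ?_
  have hs := Finset.mem_powerset.mp hs
  rw [wt_insert n ξ m s hs, Finset.card_insert_of_notMem fun h => hnot (hs h)]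
  by_cases h : Even s.card
  · have h' : ¬ Even (s.card + 1) := by simpa [Nat.even_add_one] using h
    have h'' : Odd (s.card + 1) := by simpa using h'
    have hexp : (Real.exp (2 * n * ξ (m + 1)) : ℂ) *
        (Real.exp (2 * n * (-1 * ξ (m + 1))) : ℂ) = 1 := by
      rw [← Complex.ofReal_mul, ← Real.exp_add]
      ring_nf
      simp
    rw [if_neg h', if_pos h, h''.neg_one_pow]
    push_cast at hexp ⊢
    linear_combination ((wt n ξ s : ℂ) * (-1) ^ (m + 1) * t ^ (s.card + 1)) * hexp
  · simp [h, Nat.even_add_one]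

/-- For `v` off the closed negative real axis, the hyperbolic translation
`q ↦ (q + d) / (1 + d q)` preserves the cone of nonnegative combinations of `1` and `v`. -/
lemma cone_step {v q : ℂ} (hv : v ∈ Complex.slitPlane) {α β d : ℝ} (hα : 0 ≤ α) (hβ : 0 ≤ β)
    (hq : q = α + β * v) (hd : 0 ≤ d) (hd1 : d < 1) :
    1 + d * q ≠ 0 ∧
      ∃ α' β' : ℝ, 0 ≤ α' ∧ 0 ≤ β' ∧ (q + d) = (α' + β' * v) * (1 + d * q) := by
  have hne : 1 + d * q ≠ 0 := by
    intro h
    have hre := congrArg Complex.re h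
    have him := congrArg Complex.im h
    simp [hq] at hre him
    rcases Complex.mem_slitPlane_iff.mp hv with h0 | h0
    · nlinarith [mul_nonneg hd hα, mul_nonneg (mul_nonneg hd hβ) h0.le]
    · rcases him with h1 | h1 | h1
      · subst h1; simp at hre
      · subst h1; simp at hre; nlinarith [mul_nonneg hd hα]
      · exact h0 h1
  refine ⟨hne, ?_⟩
  set D := Complex.normSq (1 + d * q) with hD
  have hDpos : 0 < D := Complex.normSq_pos.mpr hne
  -- `(q + d) * conj (1 + d q) = (1 - d²) q + (2 d² Re q + d (1 + |q|²))`
  refine ⟨((1 - d ^ 2) * α + (2 * d ^ 2 * q.re + d * (1 + Complex.normSq q))) / D,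
    (1 - d ^ 2) * β / D, ?_, ?_, ?_⟩
  · apply div_nonneg _ hDpos.le
    have h1 : 0 ≤ (1 - d ^ 2) * α := mul_nonneg (by nlinarith) hα
    have h2 : 0 ≤ 2 * d ^ 2 * q.re + d * (1 + Complex.normSq q) := by
      rw [Complex.normSq_apply]
      have : 0 ≤ d * ((1 - d ^ 2) + (d + q.re) ^ 2 + q.im ^ 2) := by
        apply mul_nonneg hd
        nlinarith [sq_nonneg (d + q.re), sq_nonneg q.im]
      nlinarith
    linarith
  · exact div_nonneg (mul_nonneg (by nlinarith) hβ) hDpos.le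
  · have hDc : (D : ℂ) ≠ 0 := by exact_mod_cast hDpos.ne'
    have hD' : (D : ℂ) = (1 + d * q) * (1 + d * (starRingEnd ℂ) q) := by
      rw [hD, ← Complex.mul_conj]; simp
    have hn : (Complex.normSq q : ℂ) = q * (starRingEnd ℂ) q := (Complex.mul_conj q).symm
    have hr : (q.re : ℂ) = (q + (starRingEnd ℂ) q) / 2 := Complex.re_eq_add_conj q
    push_cast
    field_simp
    rw [hD', hn, hr]
    linear_combination (1 - (d : ℂ) ^ 2) * (1 + d * q) * hq

/-- The multiplier is off the closed negative axis unless `t` is real with `|t| ≥ 1`. -/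
lemma multiplier_mem_slitPlane {t : ℂ} (ht : t.im ≠ 0 ∨ t.re ^ 2 < 1) :
    1 + t ≠ 0 ∧ 1 - t ≠ 0 ∧ (1 - t) / (1 + t) ∈ Complex.slitPlane := by
  have hp : 1 + t ≠ 0 := by
    intro h
    have hre := congrArg Complex.re h
    have him := congrArg Complex.im h
    simp at hre him
    rcases ht with h | h
    · exact h him
    · nlinarith
  have hm : 1 - t ≠ 0 := by
    intro h
    have hre := congrArg Complex.re h
    have him := congrArg Complex.im h
    simp at hre him
    rcases ht with h | h
    · exact h him
    · nlinarith
  refine ⟨hp, hm, ?_⟩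
  have hD : 0 < Complex.normSq (1 + t) := Complex.normSq_pos.mpr hp
  rw [Complex.mem_slitPlane_iff]
  by_cases h : t.im = 0
  · left
    have h1 : t.re ^ 2 < 1 := ht.resolve_left fun h' => h' h
    rw [Complex.div_re]
    simp only [Complex.sub_re, Complex.add_re, Complex.one_re, Complex.sub_im, Complex.add_im,
      Complex.one_im, h]
    have : 0 < (1 - t.re) * (1 + t.re) / Complex.normSq (1 + t) := div_pos (by nlinarith) hD
    simpa using this
  · right
    have : ((1 - t) / (1 + t)).im = -2 * t.im / Complex.normSq (1 + t) := by
      rw [Complex.div_im]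
      simp only [Complex.sub_re, Complex.add_re, Complex.one_re, Complex.sub_im, Complex.add_im,
        Complex.one_im]
      ring
    rw [this]
    exact div_ne_zero (by simpa using h) hD.ne'

/-- The invariant: at every scale `b` not exceeding the `exp (2 n ξ i)` already used, the ratio
`(E - b O) / (E + b O)` is finite and lies in the cone spanned by `1` and the multiplier
`u ^ ((-1) ^ m)`, `u = (1 - t) / (1 + t)`. -/
lemma ratio_mem_cone (n : ℕ) (ξ : ℕ → ℝ) {t : ℂ} (ht : t.im ≠ 0 ∨ t.re ^ 2 < 1) (N : ℕ)
    (hξ : ∀ i j, 1 ≤ i → i < j → j ≤ N → ξ j < ξ i) (m : ℕ) (hm : m ≤ N) :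
    ∀ b : ℝ, 0 < b → (∀ i, 1 ≤ i → i ≤ m → b ≤ Real.exp (2 * n * ξ i)) →
      evenSum n ξ t m + b * oddSum n ξ t m ≠ 0 ∧
      ∃ α β : ℝ, 0 ≤ α ∧ 0 ≤ β ∧
        evenSum n ξ t m - b * oddSum n ξ t m =
          (α + β * ((1 - (-1) ^ m * t) / (1 + (-1) ^ m * t))) *
            (evenSum n ξ t m + b * oddSum n ξ t m) := by
  induction m with
  | zero =>
    intro b _ _
    have hE : evenSum n ξ t 0 = 1 := by simp [evenSum, wt]
    have hO : oddSum n ξ t 0 = 0 := by simp [oddSum]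
    rw [hE, hO]
    exact ⟨by simp, 1, 0, by norm_num, le_rfl, by simp⟩
  | succ m ih =>
    intro b hb hba
    set a := Real.exp (2 * n * ξ (m + 1)) with ha
    have hapos : 0 < a := Real.exp_pos _
    have hab : b ≤ a := hba (m + 1) (by omega) le_rfl
    obtain ⟨hP, α, β, hα, hβ, hQ⟩ := ih (by omega) a hapos (by
      intro i hi him
      apply Real.exp_le_exp.mpr
      have := hξ i (m + 1) hi (by omega) hm
      exact mul_le_mul_of_nonneg_left this.le (by positivity))
    have hE := evenSum_succ n ξ t m
    have hO := oddSum_succ n ξ t m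
    rw [← ha] at hE hO
    set E := evenSum n ξ t m
    set O := oddSum n ξ t m
    set E' := evenSum n ξ t (m + 1)
    set O' := oddSum n ξ t (m + 1)
    -- `σ` is the sign attached to the new index
    obtain ⟨σ, hσ⟩ : ∃ σ : ℂ, σ = (-1) ^ (m + 1) := ⟨_, rfl⟩
    have hσm : (-1 : ℂ) ^ m = -σ := by rw [hσ, pow_succ]; ring
    have hσt : (σ * t).im ≠ 0 ∨ (σ * t).re ^ 2 < 1 := by
      rcases neg_one_pow_eq_or ℂ (m + 1) with h | h <;> rw [hσ, h] <;> simpa using ht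
    obtain ⟨hp, hmn, hslit⟩ := multiplier_mem_slitPlane hσt
    rw [hσm, neg_mul, sub_neg_eq_add, ← sub_eq_add_neg] at hQ
    rw [← hσ] at hE hO ⊢
    have hP' : E' + a * O' = (1 + σ * t) * (E + a * O) := by
      rw [hE]; linear_combination hO
    have hQ' : E' - a * O' = (1 - σ * t) * (E - a * O) := by
      rw [hE]; linear_combination -hO
    have hP'ne : E' + a * O' ≠ 0 := by rw [hP']; exact mul_ne_zero hp hP
    set v := (1 - σ * t) / (1 + σ * t) with hv
    have hq : E' - a * O' = ((β : ℂ) + α * v) * (E' + a * O') := by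
      rw [hQ', hQ, hP', hv]
      field_simp
      ring
    have hsum : 0 < a + b := by positivity
    have hdef : (0 : ℝ) ≤ (a - b) / (a + b) := div_nonneg (by linarith) hsum.le
    have hdef1 : (a - b) / (a + b) < 1 := by rw [div_lt_one hsum]; linarith
    obtain ⟨hne, α', β', hα', hβ', hq'⟩ := cone_step hslit hβ hα rfl hdef hdef1
    have hac : (a : ℂ) ≠ 0 := by exact_mod_cast hapos.ne'
    have hsc : (a : ℂ) + b ≠ 0 := by exact_mod_cast hsum.ne'
    have hbP : E' + b * O' = ((a + b) / (2 * a)) *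
        (1 + ((a - b) / (a + b) : ℝ) * ((β : ℂ) + α * v)) * (E' + a * O') := by
      have h1 : ((a + b) / (2 * a)) *
        (1 + ((a - b) / (a + b) : ℝ) * ((β : ℂ) + α * v)) * (E' + a * O') =
          ((a + b) / (2 * a)) * ((E' + a * O') + ((a - b) / (a + b) : ℝ) * (E' - a * O')) := by
        rw [hq]; ring
      rw [h1]
      push_cast
      field_simp
      ring
    have hbQ : E' - b * O' = ((a + b) / (2 * a)) *
        (((β : ℂ) + α * v) + ((a - b) / (a + b) : ℝ)) * (E' + a * O') := by
      have h1 : ((a + b) / (2 * a)) *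
        (((β : ℂ) + α * v) + ((a - b) / (a + b) : ℝ)) * (E' + a * O') =
          ((a + b) / (2 * a)) * ((E' - a * O') + ((a - b) / (a + b) : ℝ) * (E' + a * O')) := by
        rw [hq]; ring
      rw [h1]
      push_cast
      field_simp
      ring
    refine ⟨?_, α', β', hα', hβ', ?_⟩
    · rw [hbP]
      exact mul_ne_zero (mul_ne_zero (div_ne_zero hsc (mul_ne_zero two_ne_zero hac)) hne) hP'ne
    · rw [hbQ, hbP, hq']
      ring

lemma eval_fPoly (n N : ℕ) (ξ : ℕ → ℝ) (e : ℝ) (he : e ≠ 0) (z : ℂ) (hz : z ≠ 0) :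
    (fPoly n N ξ e).eval z =
      z ^ N * (evenSum n ξ (1 / (e * z)) N + oddSum n ξ (1 / (e * z)) N) := by
  have hec : (e : ℂ) ≠ 0 := by exact_mod_cast he
  rw [evenSum, oddSum, ← Finset.sum_add_distrib, Finset.sum_powerset, Nat.card_Icc,
    Nat.add_sub_cancel, fPoly, Polynomial.eval_finsetSum, Finset.mul_sum]
  refine Finset.sum_congr rfl fun k hk => ?_
  have hk : k ≤ N := by simpa [Nat.lt_succ_iff] using hk
  have hzk : z ^ N = z ^ (N - k) * z ^ k := by rw [← pow_add, Nat.sub_add_cancel hk]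
  have hS : ∀ s ∈ (Finset.Icc 1 N).powersetCard k,
      ((if Even s.card then (wt n ξ s : ℂ) * (1 / (e * z)) ^ s.card else 0) +
        if Even s.card then 0 else (wt n ξ s : ℂ) * (1 / (e * z)) ^ s.card) =
      (wt n ξ s : ℂ) * (1 / (e * z)) ^ k := by
    intro s hs
    rw [(Finset.mem_powersetCard.mp hs).2]
    split_ifs <;> simp
  have hsgn : sgnExpSum n ξ 1 N k = ∑ s ∈ (Finset.Icc 1 N).powersetCard k, wt n ξ s := rfl
  rw [Finset.sum_congr rfl hS, ← Finset.sum_mul, hsgn, hzk]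
  simp only [Polynomial.eval_mul, Polynomial.eval_C, Polynomial.eval_pow, Polynomial.eval_X,
    Complex.ofReal_sum]
  rw [div_pow, mul_pow, one_pow]
  field_simp

lemma root_fPoly (N n : ℕ) (hN : 0 < N) (ξ : ℕ → ℝ)
    (hξ : ∀ i j, 1 ≤ i → i < j → j ≤ N → ξ j < ξ i) (hpos : 0 < ξ N) (e : ℝ) (he : e ^ 2 = 4)
    (z : ℂ) (hroot : (fPoly n N ξ e).IsRoot z) :
    z.im = 0 ∧ -(1 / 2) ≤ z.re ∧ z.re ≤ 1 / 2 := by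
  by_cases hz : z = 0
  · subst hz; norm_num
  have he0 : e ≠ 0 := by rintro rfl; norm_num at he
  rw [Polynomial.IsRoot, eval_fPoly n N ξ e he0 z hz] at hroot
  have hnot : ¬ ((1 / (e * z)).im ≠ 0 ∨ (1 / (e * z)).re ^ 2 < 1) := by
    intro ht
    refine (ratio_mem_cone n ξ ht N hξ N le_rfl 1 one_pos ?_).1 ?_
    · intro i hi hiN
      apply Real.one_le_exp
      have : 0 < ξ i := by
        rcases hiN.eq_or_lt with rfl | h
        · exact hpos
        · exact hpos.trans (hξ i N hi h le_rfl)
      positivity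
    · rw [Complex.ofReal_one, one_mul]
      exact (mul_eq_zero.mp hroot).resolve_left (pow_ne_zero _ hz)
  push Not at hnot
  obtain ⟨him, hre⟩ := hnot
  obtain ⟨r, hr⟩ : ∃ r : ℝ, 1 / (e * z) = r :=
    ⟨(1 / (e * z)).re, Complex.ext (by simp) (by rw [him]; simp)⟩
  rw [hr, Complex.ofReal_re] at hre
  have hr0 : r ≠ 0 := by rintro rfl; norm_num at hre
  have hzr : z = ((1 / (e * r) : ℝ) : ℂ) := by
    have hec : (e : ℂ) ≠ 0 := by exact_mod_cast he0
    have hrc : (r : ℂ) ≠ 0 := by exact_mod_cast hr0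
    push_cast
    rw [← hr]
    field_simp
  rw [hzr, Complex.ofReal_re, Complex.ofReal_im]
  refine ⟨rfl, abs_le.mp ?_⟩
  apply abs_le_of_sq_le_sq _ (by norm_num)
  rw [div_pow, mul_pow, he, div_le_iff₀ (by positivity)]
  linarith

lemma card_roots_fPoly (n N : ℕ) (ξ : ℕ → ℝ) (e : ℝ) :
    Multiset.card (fPoly n N ξ e).roots = N := by
  have hdeg : (fPoly n N ξ e).natDegree ≤ N := by
    apply Polynomial.natDegree_sum_le_of_forall_le
    intro k _
    exact (Polynomial.natDegree_C_mul_X_pow_le _ _).trans (Nat.sub_le _ _)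
  have hcoeff : (fPoly n N ξ e).coeff N = 1 := by
    rw [fPoly, Polynomial.finsetSum_coeff, Finset.sum_eq_single 0]
    · simp [sgnExpSum]
    · intro k hk hk0
      rw [Polynomial.coeff_C_mul_X_pow, if_neg]
      have : k < N + 1 := Finset.mem_range.mp hk
      omega
    · simp
  rw [IsAlgClosed.card_roots_eq_natDegree]
  exact Polynomial.natDegree_eq_of_le_of_coeff_ne_zero hdeg (by rw [hcoeff]; exact one_ne_zero)

/-- Every complex root of `f_N^+` (and of `f_N^−`) is real and lies in
`[−1/2, 1/2]`; moreover each of `f_N^+`, `f_N^−` has exactly `N` roots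
counted with multiplicity. -/
theorem roots_fPoly_real_mem_Icc (N n : ℕ) (hN : 0 < N) (hn : 0 < n) (ξ : ℕ → ℝ)
    (hξ : ∀ i j, 1 ≤ i → i < j → j ≤ N → ξ j < ξ i) (hpos : 0 < ξ N) :
    (∀ z : ℂ, (fPoly n N ξ 2).IsRoot z →
        z.im = 0 ∧ -(1 / 2) ≤ z.re ∧ z.re ≤ 1 / 2) ∧
      (∀ z : ℂ, (fPoly n N ξ (-2)).IsRoot z →
        z.im = 0 ∧ -(1 / 2) ≤ z.re ∧ z.re ≤ 1 / 2) ∧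
      Multiset.card (fPoly n N ξ 2).roots = N ∧
      Multiset.card (fPoly n N ξ (-2)).roots = N := by
  exact ⟨root_fPoly N n hN ξ hξ hpos 2 (by norm_num),
    root_fPoly N n hN ξ hξ hpos (-2) (by norm_num),
    card_roots_fPoly n N ξ 2, card_roots_fPoly n N ξ (-2)⟩
end

section
/- For every odd integer N ≥ 3 and every 1 ≤ k ≤ N−1: h_{N,k} = −h_{N−1,k−1} if k is odd, and h_{N,k} = h_{N−1,k} if k is even. -/
/-!
Splitting the `k`-subsets of `{1, …, N + 1}` by whether they contain `N + 1` gives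
`h_{N+1,k+1} = h_{N,k+1} + (-1)^{N+1} h_{N,k}` (`hSgn_succ_succ`). Two such steps from an even
index `2m` cancel the middle terms: `h_{2m+2,k+2} = h_{2m,k+2} - h_{2m,k}`. Hence `h_{2m,k} = 0`
for odd `k` (`hSgn_even_odd`), by induction on `m`. For odd `N` the recurrence reads
`h_{N,k} = h_{N-1,k} - h_{N-1,k-1}`, and one of the two terms on the right vanishes according to
the parity of `k`.
-/

open Finset

/-- The signed subset sum `h_{N,k} = Σ_{1 ≤ i_1 < ⋯ < i_k ≤ N} (−1)^{i_1+⋯+i_k}`,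
with `h_{N,0} = 1`. -/
def hSgn (N k : ℕ) : ℤ :=
  ∑ s ∈ (Finset.Icc 1 N).powersetCard k, (-1 : ℤ) ^ (∑ i ∈ s, i)

lemma hSgn_zero_right (N : ℕ) : hSgn N 0 = 1 := by
  simp [hSgn]

lemma hSgn_succ_succ (N k : ℕ) :
    hSgn (N + 1) (k + 1) = hSgn N (k + 1) + (-1) ^ (N + 1) * hSgn N k := by
  have hmem : N + 1 ∉ Finset.Icc 1 N := by simp
  have hIcc : Finset.Icc 1 (N + 1) = insert (N + 1) (Finset.Icc 1 N) := by
    ext x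
    simp only [Finset.mem_Icc, Finset.mem_insert]
    omega
  have hnot : ∀ s ∈ (Finset.Icc 1 N).powersetCard k, N + 1 ∉ s := fun s hs h =>
    hmem ((Finset.mem_powersetCard.mp hs).1 h)
  unfold hSgn
  rw [hIcc, Finset.powersetCard_succ_insert hmem, Finset.sum_union, Finset.sum_image,
    Finset.mul_sum]
  · congr 1
    refine Finset.sum_congr rfl fun s hs => ?_
    rw [Finset.sum_insert (hnot s hs), pow_add]
  · intro s hs t ht hst
    rw [← Finset.erase_insert (hnot s hs), ← Finset.erase_insert (hnot t ht)]
    exact congrArg (fun u => u.erase (N + 1)) hst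
  · rw [Finset.disjoint_left]
    intro s hs hs'
    obtain ⟨t, -, rfl⟩ := Finset.mem_image.mp hs'
    exact hmem ((Finset.mem_powersetCard.mp hs).1 (Finset.mem_insert_self _ _))

lemma hSgn_even_odd (m j : ℕ) : hSgn (2 * m) (2 * j + 1) = 0 := by
  induction m generalizing j with
  | zero =>
    unfold hSgn
    rw [Finset.powersetCard_eq_empty.mpr (by simp), Finset.sum_empty]
  | succ m ih =>
    have hodd : (-1 : ℤ) ^ (2 * m + 1) = -1 := Odd.neg_one_pow ⟨m, rfl⟩
    have heven : (-1 : ℤ) ^ (2 * m + 1 + 1) = 1 := Even.neg_one_pow ⟨m + 1, by ring⟩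
    rw [show 2 * (m + 1) = 2 * m + 1 + 1 by ring, hSgn_succ_succ, hSgn_succ_succ, hodd, heven,
      ih j]
    cases j with
    | zero => simp [hSgn_zero_right]
    | succ j =>
      rw [show 2 * (j + 1) = 2 * j + 1 + 1 by ring, hSgn_succ_succ, hodd, ih j]
      ring

/-- For every odd `N ≥ 3` and every `1 ≤ k ≤ N−1`:
`h_{N,k} = −h_{N−1,k−1}` if `k` is odd, and `h_{N,k} = h_{N−1,k}` if `k` is even. -/
theorem hSgn_odd_rec (N : ℕ) (hN : 3 ≤ N) (hNo : Odd N) (k : ℕ)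
    (hk1 : 1 ≤ k) (hkN : k ≤ N - 1) :
    (Odd k → hSgn N k = -hSgn (N - 1) (k - 1)) ∧
      (Even k → hSgn N k = hSgn (N - 1) k) := by
  obtain ⟨m, rfl⟩ := hNo
  obtain ⟨k, rfl⟩ : ∃ l, k = l + 1 := ⟨k - 1, by omega⟩
  have hodd : (-1 : ℤ) ^ (2 * m + 1) = -1 := Odd.neg_one_pow ⟨m, rfl⟩
  rw [hSgn_succ_succ, hodd, Nat.add_sub_cancel, Nat.add_sub_cancel]
  refine ⟨?_, ?_⟩
  · rintro ⟨j, hj⟩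
    rw [hj, hSgn_even_odd]
    ring
  · rintro ⟨j, hj⟩
    obtain ⟨i, rfl⟩ : ∃ i, k = 2 * i + 1 := ⟨j - 1, by omega⟩
    rw [hSgn_even_odd]
    ring
end

section
/- Every complex eigenvalue of the N×N real matrix K_{N,c} (the transposed n-order even NP matrix) is real and lies in the interval [−1/2, 1/2]; in particular K_{N,c} has N real eigenvalues, counted with multiplicity, all contained in [−1/2, 1/2]. -/
/-!
Write `x_k = n ξ_k` and let `μ` be an eigenvalue with eigenvector `u`. The function
`φ(x) = ∑ u_j cosh(min(x, x_j)) e^{-max(x, x_j)}` solves `φ'' = φ` away from the points `x_k`, with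
`φ'(0) = 0` and decay at infinity; its derivative jumps by `-u_k` at `x_k`, while the matrix (up to
the row signs) computes minus the mean of the two one-sided derivatives there. Hence the eigenvalue
equation says exactly that `κ φ'` is continuous at every `x_k`, where the weight
`κ = μ ± 1/2` alternates from one interval to the next. Multiplying `(κ φ')' = κ φ` by the
conjugate of `φ` and integrating by parts gives `∑ κ_i E_i = 0`, where `E_i ≥ 0` is the energy
`∫ |φ'|² + |φ|²` of `φ` on the `i`-th interval. Since `∑ E_i > 0` (otherwise `u = 0`), this forces
`μ` to be real, and `μ ∑ E_i = ∑ ∓ E_i / 2` bounds it by `1/2` in absolute value.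

No integrals are needed: on each interval `φ = P cosh x + Q e^{-x}`, and `E_i` is the difference of
the values of `boundaryForm P Q` (that is, of `conj φ * φ'`) at the endpoints; see
`boundaryForm_sub`. The energy identity is a rearrangement of the boundary terms in
`sum_weight_mul_energy`.
-/

open Finset Polynomial

/-- The transposed `n`-order even NP matrix `K_{N,c}`: with 1-based indices
`p = a+1`, `q = b+1`, the `(p,p)` entry is `(−1)^p (1/2) e^{−2nξ_p}`, the
`(p,q)` entry for `q > p` is `(−1)^p cosh(nξ_q) e^{−nξ_p}`, and for `q < p` it
is `(−1)^{p−1} sinh(nξ_p) e^{−nξ_q}`. -/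
noncomputable def Kc (n N : ℕ) (ξ : ℕ → ℝ) : Matrix (Fin N) (Fin N) ℝ :=
  fun a b =>
    if a = b then
      (-1 : ℝ) ^ ((a : ℕ) + 1) * (Real.exp (-(2 * n * ξ ((a : ℕ) + 1))) / 2)
    else if a < b then
      (-1 : ℝ) ^ ((a : ℕ) + 1) * (Real.cosh (n * ξ ((b : ℕ) + 1)) * Real.exp (-(n * ξ ((a : ℕ) + 1))))
    else
      (-1 : ℝ) ^ (a : ℕ) * (Real.sinh (n * ξ ((a : ℕ) + 1)) * Real.exp (-(n * ξ ((b : ℕ) + 1))))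

/-- The value of `conj φ * φ'` at `x`, for the function `φ(x) = P cosh x + Q e^{-x}`. -/
noncomputable def boundaryForm (P Q : ℂ) (x : ℝ) : ℂ :=
  (starRingEnd ℂ) (P * (Real.cosh x : ℝ) + Q * (Real.exp (-x) : ℝ)) *
    (P * (Real.sinh x : ℝ) - Q * (Real.exp (-x) : ℝ))

/-- The energy of `φ = P cosh x + Q e^{-x}` between `y` and `x`: with `φ = a e^x + b e^{-x}` the
cross terms of `conj φ * φ'` do not depend on the point and cancel. -/
lemma boundaryForm_sub (P Q : ℂ) (x y : ℝ) :
    boundaryForm P Q x - boundaryForm P Q y =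
      ((Complex.normSq (P / 2) * (Real.exp x ^ 2 - Real.exp y ^ 2) +
        Complex.normSq (P / 2 + Q) * (Real.exp (-y) ^ 2 - Real.exp (-x) ^ 2) : ℝ) : ℂ) := by
  have hx : Real.exp x * Real.exp (-x) = 1 := by rw [← Real.exp_add]; simp
  have hy : Real.exp y * Real.exp (-y) = 1 := by rw [← Real.exp_add]; simp
  unfold boundaryForm
  rw [Real.cosh_eq, Real.sinh_eq, Real.cosh_eq, Real.sinh_eq]
  generalize Real.exp x = a at *
  generalize Real.exp (-x) = b at *
  generalize Real.exp y = c at *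
  generalize Real.exp (-y) = d at *
  have e1 : P / 2 = ⟨P.re / 2, P.im / 2⟩ := by
    apply Complex.ext <;> simp
  rw [e1]
  apply Complex.ext
  · simp only [Complex.sub_re, Complex.mul_re, Complex.conj_re, Complex.conj_im, Complex.add_re,
      Complex.add_im, Complex.sub_im, Complex.mul_im, Complex.ofReal_re, Complex.ofReal_im,
      Complex.normSq_apply]
    ring
  · simp only [Complex.sub_re, Complex.mul_re, Complex.conj_re, Complex.conj_im, Complex.add_re,
      Complex.add_im, Complex.sub_im, Complex.mul_im, Complex.ofReal_re, Complex.ofReal_im,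
      Complex.normSq_apply]
    linear_combination (P.re * Q.im - P.im * Q.re) * (hy - hx)

/-- The term at the upper endpoint of interval `i`; the outermost interval `i = 0` is unbounded
and contributes nothing at infinity. -/
noncomputable def upperTerm (x : ℕ → ℝ) (P Q : ℕ → ℂ) : ℕ → ℂ
  | 0 => 0
  | i + 1 => boundaryForm (P (i + 1)) (Q (i + 1)) (x i)

/-- The term at the lower endpoint of interval `i`; the innermost interval `i = N` ends at `0`,
where `φ' = 0`. -/
noncomputable def lowerTerm (N : ℕ) (x : ℕ → ℝ) (P Q : ℕ → ℂ) (i : ℕ) : ℂ :=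
  if i < N then boundaryForm (P i) (Q i) (x i) else 0

/-- The energies are nonnegative, and a vanishing energy forces `φ` to have no `cosh` component. -/
lemma exists_energy (N : ℕ) (x : ℕ → ℝ) (P Q : ℕ → ℂ) (hpos : ∀ i < N, 0 < x i)
    (hx : ∀ i, i + 1 < N → x (i + 1) < x i) (hP : P 0 = 0) (hQ : Q N = 0)
    (i : ℕ) (hi : i ≤ N) :
    ∃ e : ℝ, upperTerm x P Q i - lowerTerm N x P Q i = (e : ℂ) ∧ 0 ≤ e ∧ (e = 0 → P i = 0) := by
  have key : ∀ (p q : ℂ) (s t : ℝ), t < s →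
      ∃ e : ℝ, boundaryForm p q s - boundaryForm p q t = (e : ℂ) ∧ 0 ≤ e ∧ (e = 0 → p = 0) := by
    intro p q s t hst
    refine ⟨_, boundaryForm_sub p q s t, ?_, ?_⟩
    all_goals
      have h1 : 0 < Real.exp s ^ 2 - Real.exp t ^ 2 := by
        have : Real.exp t ^ 2 < Real.exp s ^ 2 := by gcongr
        linarith
      have h2 : 0 < Real.exp (-t) ^ 2 - Real.exp (-s) ^ 2 := by
        have : Real.exp (-s) ^ 2 < Real.exp (-t) ^ 2 := by gcongr
        linarith
      have h3 := mul_nonneg (Complex.normSq_nonneg (p / 2)) h1.le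
      have h4 := mul_nonneg (Complex.normSq_nonneg (p / 2 + q)) h2.le
    · linarith
    · intro h
      have h5 : Complex.normSq (p / 2) * (Real.exp s ^ 2 - Real.exp t ^ 2) = 0 := by linarith
      have h6 : Complex.normSq (p / 2) = 0 := by
        rcases mul_eq_zero.1 h5 with h | h
        · exact h
        · exact absurd h h1.ne'
      simpa using h6
  rcases i with _ | i
  · by_cases h0 : 0 < N
    · refine ⟨Complex.normSq (Q 0) * Real.exp (-(x 0)) ^ 2, ?_, ?_, fun _ => hP⟩
      · simp only [upperTerm, lowerTerm, h0, if_true, boundaryForm, hP]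
        push_cast [Complex.normSq_eq_conj_mul_self]
        simp only [map_add, map_mul, Complex.conj_ofReal, zero_mul, map_zero, ← Complex.ofReal_neg,
          ← Complex.ofReal_exp]
        ring
      · exact mul_nonneg (Complex.normSq_nonneg _) (by positivity)
    · exact ⟨0, by simp [upperTerm, lowerTerm, h0], le_rfl, fun _ => hP⟩
  · by_cases h1 : i + 1 < N
    · simp only [upperTerm, lowerTerm, h1, if_true]
      exact key _ _ _ _ (hx i h1)
    · have hN : i + 1 = N := by omega
      simp only [upperTerm, lowerTerm, h1, if_false]
      have h0 : boundaryForm (P (i + 1)) (Q (i + 1)) 0 = 0 := by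
        simp [boundaryForm, hN, hQ]
      obtain ⟨e, he, he'⟩ := key (P (i + 1)) (Q (i + 1)) (x i) 0 (hpos i (by omega))
      rw [h0] at he
      exact ⟨e, he, he'⟩

/-- If `κ * conj φ * φ'` takes the same value on both sides of every node, the weighted energies sum to zero. -/
lemma sum_weight_mul_energy (N : ℕ) (x : ℕ → ℝ) (P Q κ : ℕ → ℂ)
    (h : ∀ k < N, κ (k + 1) * boundaryForm (P (k + 1)) (Q (k + 1)) (x k) =
      κ k * boundaryForm (P k) (Q k) (x k)) :
    ∑ i ∈ range (N + 1), κ i * (upperTerm x P Q i - lowerTerm N x P Q i) = 0 := by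
  simp only [mul_sub, Finset.sum_sub_distrib]
  rw [Finset.sum_range_succ', Finset.sum_range_succ _ N]
  simp only [upperTerm, lowerTerm, lt_irrefl, if_false, mul_zero, add_zero]
  rw [sub_eq_zero]
  refine Finset.sum_congr rfl fun k hk => ?_
  have hk := Finset.mem_range.1 hk
  rw [if_pos hk, h k hk]

/-- The row `k` of the eigenvalue equation, in terms of the partial sums
`P = ∑_{j<k} u_j e^{-x_j}` and `Q = ∑_{j>k} u_j cosh x_j`, yields the matching of
`κ * conj φ * φ'` at `x_k`: the weight is `μ - s / 2` just below `x_k` and `μ + s / 2` just above,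
with `s = (-1)^k` for 0-based `k`. -/
lemma matching (s μ P Q u : ℂ) (x : ℝ)
    (h : μ * u = -s * (Q * (Real.exp (-x) : ℝ) - P * (Real.sinh x : ℝ)
      + ((Real.exp (-x) : ℝ) : ℂ) ^ 2 / 2 * u)) :
    (μ - s / 2) * boundaryForm (P + u * (Real.exp (-x) : ℝ)) Q x =
      (μ + s / 2) * boundaryForm P (Q + u * (Real.cosh x : ℝ)) x := by
  have hx : ((Real.exp x : ℝ) : ℂ) * ((Real.exp (-x) : ℝ) : ℂ) = 1 := by
    rw [← Complex.ofReal_mul, ← Real.exp_add]; simp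
  have hφ : (P + u * (Real.exp (-x) : ℝ)) * (Real.cosh x : ℝ) + Q * (Real.exp (-x) : ℝ) =
      P * (Real.cosh x : ℝ) + (Q + u * (Real.cosh x : ℝ)) * (Real.exp (-x) : ℝ) := by ring
  unfold boundaryForm
  rw [hφ, mul_left_comm, mul_left_comm (μ + s / 2)]
  congr 1
  rw [Real.cosh_eq, Real.sinh_eq] at *
  push_cast only [Complex.ofReal_div, Complex.ofReal_sub, Complex.ofReal_add] at *
  generalize ((Real.exp x : ℝ) : ℂ) = a at *
  generalize ((Real.exp (-x) : ℝ) : ℂ) = b at *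
  simp only [Complex.ofReal_ofNat] at *
  linear_combination h + μ * u * hx

/-- Every complex eigenvalue of `K_{N,c}` (i.e. every root of its
characteristic polynomial over `ℂ`) is real and lies in `[−1/2, 1/2]`;
in particular `K_{N,c}` has exactly `N` eigenvalues counted with multiplicity,
all real and contained in `[−1/2, 1/2]`. -/
theorem eigenvalues_Kc_real_mem_Icc (N n : ℕ) (hN : 0 < N) (hn : 0 < n) (ξ : ℕ → ℝ)
    (hξ : ∀ i j, 1 ≤ i → i < j → j ≤ N → ξ j < ξ i) (hpos : 0 < ξ N) :
    (∀ μ : ℂ, ((Kc n N ξ).map (Complex.ofReal)).charpoly.IsRoot μ →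
        μ.im = 0 ∧ -(1 / 2) ≤ μ.re ∧ μ.re ≤ 1 / 2) ∧
      Multiset.card ((Kc n N ξ).map (Complex.ofReal)).charpoly.roots = N := by
  refine ⟨fun μ hμ => ?_, ?_⟩
  swap
  · rw [splits_iff_card_roots.1 (IsAlgClosed.splits _), Matrix.charpoly_natDegree_eq_dim,
      Fintype.card_fin]
  have hn' : (0 : ℝ) < n := by exact_mod_cast hn
  obtain ⟨v, hv0, hv⟩ : ∃ v : Fin N → ℂ, v ≠ 0 ∧
      ((Kc n N ξ).map (Complex.ofReal)).mulVec v = μ • v := by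
    rw [IsRoot.def, Matrix.eval_charpoly] at hμ
    obtain ⟨v, hv0, hv⟩ := Matrix.exists_mulVec_eq_zero_iff.2 hμ
    refine ⟨v, hv0, ?_⟩
    rw [Matrix.sub_mulVec, sub_eq_zero] at hv
    rw [← hv]
    ext i
    simp [Matrix.scalar_apply, Matrix.mulVec_diagonal]
  set x : ℕ → ℝ := fun k => n * ξ (k + 1) with hxdef
  set u : ℕ → ℂ := fun j => if h : j < N then v ⟨j, h⟩ else 0 with hu
  -- On the interval just above the node `x i` (0-based), `φ = P i * cosh + Q i * exp (-·)`.
  set P : ℕ → ℂ := fun i => ∑ j ∈ range i, u j * (Real.exp (-(x j)) : ℝ) with hP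
  set Q : ℕ → ℂ := fun i => ∑ j ∈ Ico i N, u j * (Real.cosh (x j) : ℝ) with hQ
  have hxpos : ∀ i < N, 0 < x i := by
    intro i hi
    refine mul_pos hn' ?_
    rcases (show i + 1 = N ∨ i + 1 < N by omega) with h | h
    · rw [h]; exact hpos
    · exact hpos.trans (hξ _ _ (by omega) h le_rfl)
  have hxanti : ∀ i, i + 1 < N → x (i + 1) < x i := fun i hi =>
    mul_lt_mul_of_pos_left (hξ _ _ (by omega) (by omega) (by omega)) hn'
  have hrow : ∀ k < N, μ * u k = -(-1) ^ k * (Q (k + 1) * (Real.exp (-(x k)) : ℝ)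
      - P k * (Real.sinh (x k) : ℝ) + ((Real.exp (-(x k)) : ℝ) : ℂ) ^ 2 / 2 * u k) := by
    intro k hk
    have h1 := congrFun hv ⟨k, hk⟩
    set f : ℕ → ℂ := fun j => -(-1) ^ k * (if k = j then ((Real.exp (-(x k)) : ℝ) : ℂ) ^ 2 / 2 * u k
      else if k < j then u j * (Real.cosh (x j) : ℝ) * (Real.exp (-(x k)) : ℝ)
      else -(u j * (Real.exp (-(x j)) : ℝ) * (Real.sinh (x k) : ℝ))) with hf
    have h2 : ((Kc n N ξ).map (Complex.ofReal)).mulVec v ⟨k, hk⟩ = ∑ j ∈ range N, f j := by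
      rw [Finset.sum_range, Matrix.mulVec, dotProduct]
      refine Finset.sum_congr rfl fun j _ => ?_
      have huj : u j = v j := by simp [hu]
      have hexp : Real.exp (-(2 * n * ξ (k + 1))) = Real.exp (-(x k)) ^ 2 := by
        rw [← Real.exp_nat_mul]; congr 1; simp only [hxdef]; push_cast; ring
      rw [hf]
      simp only [Matrix.map_apply, Kc, Fin.ext_iff, Fin.lt_def, huj, hexp]
      split_ifs with c1 c2
      · have huk : u k = v j := by rw [c1, huj]
        rw [huk]; push_cast; ring
      · push_cast [hxdef]; ring
      · push_cast [hxdef]; ring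
    have h3 : ∑ j ∈ range N, f j = ∑ j ∈ range k, f j + f k + ∑ j ∈ Ico (k + 1) N, f j := by
      rw [← Finset.sum_range_succ, Finset.sum_range_add_sum_Ico _ (by omega : k + 1 ≤ N)]
    have h4 : ∑ j ∈ range k, f j = -(-1) ^ k * -(P k * (Real.sinh (x k) : ℝ)) := by
      rw [hP, Finset.sum_mul, ← Finset.sum_neg_distrib, Finset.mul_sum]
      refine Finset.sum_congr rfl fun j hj => ?_
      have := Finset.mem_range.1 hj
      simp only [hf]
      rw [if_neg (by omega), if_neg (by omega)]
    have h5 : ∑ j ∈ Ico (k + 1) N, f j = -(-1) ^ k * (Q (k + 1) * (Real.exp (-(x k)) : ℝ)) := by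
      rw [hQ, Finset.sum_mul, Finset.mul_sum]
      refine Finset.sum_congr rfl fun j hj => ?_
      have := Finset.mem_Ico.1 hj
      simp only [hf]
      rw [if_neg (by omega), if_pos (by omega)]
    have h6 : f k = -(-1) ^ k * (((Real.exp (-(x k)) : ℝ) : ℂ) ^ 2 / 2 * u k) := by simp [hf]
    have h7 : u k = v ⟨k, hk⟩ := by simp [hu, hk]
    rw [h2, h3, h4, h5, h6, Pi.smul_apply, smul_eq_mul, ← h7] at h1
    rw [← h1]; ring
  have hPsucc : ∀ k, P (k + 1) = P k + u k * (Real.exp (-(x k)) : ℝ) := fun k =>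
    Finset.sum_range_succ _ _
  have hQsucc : ∀ k < N, Q k = Q (k + 1) + u k * (Real.cosh (x k) : ℝ) := by
    intro k hk
    simp only [hQ]
    rw [Finset.sum_eq_sum_Ico_succ_bot hk, add_comm]
  have hsum := sum_weight_mul_energy N x P Q (fun i => μ + (-1) ^ i / 2) (by
    intro k hk
    have := matching ((-1) ^ k) μ (P k) (Q (k + 1)) (u k) (x k) (hrow k hk)
    rw [← hPsucc, ← hQsucc k hk] at this
    rw [← this, pow_succ]
    ring)
  have hen := exists_energy N x P Q hxpos hxanti (by simp [hP]) (by simp [hQ])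
  choose! e he0 he1 he2 using hen
  have hsum' : ∑ i ∈ range (N + 1), (μ + (-1) ^ i / 2) * (e i : ℂ) = 0 := by
    rw [← hsum]
    refine Finset.sum_congr rfl fun i hi => ?_
    rw [he0 i (by have := Finset.mem_range.1 hi; omega)]
  have henn : ∀ i ∈ range (N + 1), 0 ≤ e i := fun i hi =>
    he1 i (by have := Finset.mem_range.1 hi; omega)
  have hepos : 0 < ∑ i ∈ range (N + 1), e i := by
    refine (Finset.sum_nonneg henn).lt_of_ne' fun h0 => hv0 ?_
    have hz := (Finset.sum_eq_zero_iff_of_nonneg henn).1 h0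
    have hPz : ∀ i ≤ N, P i = 0 := fun i hi => he2 i hi (hz i (Finset.mem_range.2 (by omega)))
    ext k
    have h1 := hPsucc k
    rw [hPz _ k.2, hPz _ k.2.le, zero_add] at h1
    have h2 : u k = v k := by simp [hu]
    rcases mul_eq_zero.1 h1.symm with h | h
    · rw [← h2, h]; rfl
    · exact absurd (Complex.ofReal_eq_zero.1 h) (Real.exp_ne_zero _)
  have hsplit : μ * ((∑ i ∈ range (N + 1), e i : ℝ) : ℂ) +
      ((∑ i ∈ range (N + 1), (-1) ^ i / 2 * e i : ℝ) : ℂ) = 0 := by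
    rw [← hsum']
    push_cast
    rw [Finset.mul_sum, ← Finset.sum_add_distrib]
    exact Finset.sum_congr rfl fun i _ => by ring
  have hbound : |∑ i ∈ range (N + 1), (-1 : ℝ) ^ i / 2 * e i| ≤
      1 / 2 * ∑ i ∈ range (N + 1), e i := by
    rw [Finset.mul_sum]
    refine (Finset.abs_sum_le_sum_abs _ _).trans (Finset.sum_le_sum fun i hi => ?_)
    rw [abs_mul, abs_div, abs_pow, abs_of_nonneg (henn i hi)]
    simp
  have him := congrArg Complex.im hsplit
  have hre := congrArg Complex.re hsplit
  simp only [Complex.add_im, Complex.add_re, Complex.im_mul_ofReal, Complex.re_mul_ofReal,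
    Complex.ofReal_im, Complex.ofReal_re, Complex.zero_re, Complex.zero_im, add_zero] at him hre
  rw [abs_le] at hbound
  refine ⟨?_, ?_, ?_⟩
  · exact (mul_eq_zero.1 him).resolve_right hepos.ne'
  · refine le_of_mul_le_mul_right ?_ hepos
    linarith [hbound.2]
  · refine le_of_mul_le_mul_right ?_ hepos
    linarith [hbound.1]
end

section
/- Every complex eigenvalue of the N×N real matrix K_{N,s} (the transposed n-order odd NP matrix) is real and lies in the interval [−1/2, 1/2]; in particular K_{N,s} has N real eigenvalues, counted with multiplicity, all contained in [−1/2, 1/2]. -/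
/-!
The matrix `2 K_{N,s}` is a discrete Neumann–Poincaré operator on the half line. With
`x_k = n ξ_k`, attach to an eigenvector `w` for the eigenvalue `μ` the function
`u(x) = ∑_j (e^{-|x - x_j|} - e^{-x - x_j}) w_j`, for which `u'' = u` off the points `x_k` and
`u(0) = u(∞) = 0`. The jump of `u'` at `x_k` is `-2 w_k`, and the eigenvalue equation says that
the mean of the one-sided derivatives at `x_k` is `± 2 μ w_k`. Together these say that
`σ u'` is continuous, where `σ = 2 μ ± 1` is constant on the layers between consecutive points, with
alternating sign. Integrating by parts layer by layer gives `∑_k σ_k E_k = 0`, where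
`E_k = ∫ |u'|² + |u|²` over the `k`-th layer is real and nonnegative. Hence
`2 μ ∑ E_k = - ∑ (-1)^k E_k`, which makes `2 μ` a real number in `[-1, 1]`, as `∑ E_k > 0`.

On layer `k` the function `u` is `α_k e^x + β_k e^{-x}`, so the argument is finite and algebraic:
`layer_identity` is the integration by parts and `layer_bound` the conclusion about `2 μ`.
-/

open Finset Polynomial

/-- The transposed `n`-order odd NP matrix `K_{N,s}`: with 1-based indices
`p = a+1`, `q = b+1`, the `(p,p)` entry is `(−1)^{p−1} (1/2) e^{−2nξ_p}`, the
`(p,q)` entry for `q > p` is `(−1)^p sinh(nξ_q) e^{−nξ_p}`, and for `q < p` it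
is `(−1)^{p−1} cosh(nξ_p) e^{−nξ_q}`. -/
noncomputable def Ks (n N : ℕ) (ξ : ℕ → ℝ) : Matrix (Fin N) (Fin N) ℝ :=
  fun a b =>
    if a = b then
      (-1 : ℝ) ^ (a : ℕ) * (Real.exp (-(2 * n * ξ ((a : ℕ) + 1))) / 2)
    else if a < b then
      (-1 : ℝ) ^ ((a : ℕ) + 1) * (Real.sinh (n * ξ ((b : ℕ) + 1)) * Real.exp (-(n * ξ ((a : ℕ) + 1))))
    else
      (-1 : ℝ) ^ (a : ℕ) * (Real.cosh (n * ξ ((a : ℕ) + 1)) * Real.exp (-(n * ξ ((b : ℕ) + 1))))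

/-- The energy `∫ |u'|² + |u|²` of the function `α_k e^x + β_k e^{-x}` over layer `k`, namely the
interval `(z k, z (k - 1))`, with `(z 0, ∞)` for `k = 0` (where `α_0 = 0` in the application). -/
noncomputable def layerEnergy (z : ℕ → ℝ) (α β : ℕ → ℂ) : ℕ → ℝ
  | 0 => Complex.normSq (β 0) * Real.exp (-z 0) ^ 2
  | k + 1 => Complex.normSq (α (k + 1)) * (Real.exp (z k) ^ 2 - Real.exp (z (k + 1)) ^ 2) +
      Complex.normSq (β (k + 1)) * (Real.exp (-z (k + 1)) ^ 2 - Real.exp (-z k) ^ 2)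

/-- The flux `conj u * u'` at `x` of the function `u = a e^x + b e^{-x}`. -/
noncomputable def flux (a b : ℂ) (x : ℝ) : ℂ :=
  (starRingEnd ℂ) (a * Real.exp x + b * Real.exp (-x)) * (a * Real.exp x - b * Real.exp (-x))

lemma ofReal_exp_mul_exp_neg (x : ℝ) : (Real.exp x : ℂ) * Real.exp (-x) = 1 := by
  rw [← Complex.ofReal_mul, ← Real.exp_add]; simp

/-- The energy between two points is the difference of the fluxes; the cross terms of the flux do
not depend on the point and cancel. -/
lemma flux_sub_flux (a b : ℂ) (x y : ℝ) :
    flux a b x - flux a b y =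
      ((Complex.normSq a * (Real.exp x ^ 2 - Real.exp y ^ 2) +
        Complex.normSq b * (Real.exp (-y) ^ 2 - Real.exp (-x) ^ 2) : ℝ) : ℂ) := by
  have hx := ofReal_exp_mul_exp_neg x
  have hy := ofReal_exp_mul_exp_neg y
  simp only [flux, map_add, map_mul, Complex.conj_ofReal, Complex.ofReal_add, Complex.ofReal_mul,
    Complex.ofReal_sub, Complex.ofReal_pow, Complex.normSq_eq_conj_mul_self]
  linear_combination ((starRingEnd ℂ) b * a - (starRingEnd ℂ) a * b) * (hx - hy)

/-- Summation by parts: the weighted energy of the layers `0, …, m` is minus the weighted flux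
at the lower end of layer `m`. -/
lemma layer_identity (N : ℕ) (z : ℕ → ℝ) (α β w : ℕ → ℂ) (l : ℂ) (hα0 : α 0 = 0)
    (hα : ∀ k < N, α (k + 1) = α k + Real.exp (-z k) * w k)
    (hβ : ∀ k < N, β (k + 1) = β k - Real.exp (z k) * w k)
    (heig : ∀ k < N, (-1) ^ k * ((α k * Real.exp (z k) - β k * Real.exp (-z k)) +
      (α (k + 1) * Real.exp (z k) - β (k + 1) * Real.exp (-z k))) = 2 * l * w k)
    (m : ℕ) (hm : m ≤ N) :
    ∑ k ∈ range (m + 1), (l + (-1) ^ k) * (layerEnergy z α β k : ℂ) =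
      -((l + (-1) ^ m) * flux (α m) (β m) (z m)) := by
  induction m with
  | zero =>
    simp only [zero_add, range_one, sum_singleton, layerEnergy, flux, hα0, map_add, map_mul,
      Complex.conj_ofReal, Complex.ofReal_mul, Complex.ofReal_pow,
      Complex.normSq_eq_conj_mul_self, map_zero]
    ring
  | succ m ih =>
    have hm' : m < N := hm
    rw [sum_range_succ, ih hm'.le]
    have hE : (layerEnergy z α β (m + 1) : ℂ) =
        flux (α (m + 1)) (β (m + 1)) (z m) - flux (α (m + 1)) (β (m + 1)) (z (m + 1)) := by
      rw [flux_sub_flux]; rfl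
    have h1 := ofReal_exp_mul_exp_neg (z m)
    -- `u` is continuous at `z m`, and `σ u'` is continuous there by the eigenvalue equation
    have hu : α (m + 1) * Real.exp (z m) + β (m + 1) * Real.exp (-z m) =
        α m * Real.exp (z m) + β m * Real.exp (-z m) := by
      rw [hα m hm', hβ m hm']; ring
    have hjump : (α (m + 1) * Real.exp (z m) - β (m + 1) * Real.exp (-z m)) -
        (α m * Real.exp (z m) - β m * Real.exp (-z m)) = 2 * w m := by
      rw [hα m hm', hβ m hm']; linear_combination 2 * w m * h1
    have hσ : (l + (-1) ^ (m + 1)) *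
          (α (m + 1) * Real.exp (z m) - β (m + 1) * Real.exp (-z m)) =
        (l + (-1) ^ m) * (α m * Real.exp (z m) - β m * Real.exp (-z m)) := by
      rw [pow_succ]
      linear_combination l * hjump - heig m hm'
    have hF : (l + (-1) ^ (m + 1)) * flux (α (m + 1)) (β (m + 1)) (z m) =
        (l + (-1) ^ m) * flux (α m) (β m) (z m) := by
      unfold flux
      rw [hu]
      linear_combination (starRingEnd ℂ) (α m * Real.exp (z m) + β m * Real.exp (-z m)) * hσ
    rw [hE]
    linear_combination hF

lemma layer_bound (N : ℕ) (z : ℕ → ℝ) (α β w : ℕ → ℂ) (l : ℂ) (hz : ∀ k < N, z (k + 1) < z k)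
    (hzN : z N = 0) (hα0 : α 0 = 0) (hβN : β N = -α N)
    (hα : ∀ k < N, α (k + 1) = α k + Real.exp (-z k) * w k)
    (hβ : ∀ k < N, β (k + 1) = β k - Real.exp (z k) * w k)
    (heig : ∀ k < N, (-1) ^ k * ((α k * Real.exp (z k) - β k * Real.exp (-z k)) +
      (α (k + 1) * Real.exp (z k) - β (k + 1) * Real.exp (-z k))) = 2 * l * w k)
    (hw : ∃ k < N, w k ≠ 0) :
    l.im = 0 ∧ -1 ≤ l.re ∧ l.re ≤ 1 := by
  have hid := layer_identity N z α β w l hα0 hα hβ heig N le_rfl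
  have hfl : flux (α N) (β N) (z N) = 0 := by simp [flux, hβN, hzN]
  rw [hfl, mul_zero, neg_zero] at hid
  have hd1 : ∀ k < N, 0 < Real.exp (z k) ^ 2 - Real.exp (z (k + 1)) ^ 2 := fun k hk =>
    sub_pos.2 (pow_lt_pow_left₀ (Real.exp_lt_exp.2 (hz k hk)) (Real.exp_pos _).le two_ne_zero)
  have hd2 : ∀ k < N, 0 < Real.exp (-z (k + 1)) ^ 2 - Real.exp (-z k) ^ 2 := fun k hk =>
    sub_pos.2 (pow_lt_pow_left₀ (Real.exp_lt_exp.2 (neg_lt_neg (hz k hk)))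
      (Real.exp_pos _).le two_ne_zero)
  have hE0 : ∀ k ∈ range (N + 1), 0 ≤ layerEnergy z α β k := by
    intro k hk
    rw [mem_range] at hk
    cases k with
    | zero => exact mul_nonneg (Complex.normSq_nonneg _) (by positivity)
    | succ k =>
      exact add_nonneg (mul_nonneg (Complex.normSq_nonneg _) (hd1 k (by omega)).le)
        (mul_nonneg (Complex.normSq_nonneg _) (hd2 k (by omega)).le)
  have hpos : 0 < ∑ k ∈ range (N + 1), layerEnergy z α β k := by
    refine lt_of_le_of_ne (sum_nonneg hE0) fun h0 => ?_
    have hall := (sum_eq_zero_iff_of_nonneg hE0).1 h0.symm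
    -- vanishing energy forces every `α k` to vanish, and `w` is made of their increments
    have hα' : ∀ k ≤ N, α k = 0 := by
      intro k hk
      cases k with
      | zero => exact hα0
      | succ k =>
        have h := hall (k + 1) (mem_range.2 (by omega))
        have h1 := mul_nonneg (Complex.normSq_nonneg (α (k + 1))) (hd1 k hk).le
        have h2 := mul_nonneg (Complex.normSq_nonneg (β (k + 1))) (hd2 k hk).le
        have h3 : Complex.normSq (α (k + 1)) *
            (Real.exp (z k) ^ 2 - Real.exp (z (k + 1)) ^ 2) = 0 := by
          simp only [layerEnergy] at h; linarith
        exact Complex.normSq_eq_zero.1 ((mul_eq_zero.1 h3).resolve_right (hd1 k hk).ne')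
    obtain ⟨k, hk, hwk⟩ := hw
    have h := hα k hk
    rw [hα' k hk.le, hα' (k + 1) hk, zero_add] at h
    rcases mul_eq_zero.1 h.symm with h | h
    · exact (Real.exp_pos (-z k)).ne' (Complex.ofReal_eq_zero.1 h)
    · exact hwk h
  set e := ∑ k ∈ range (N + 1), layerEnergy z α β k with he
  set f := ∑ k ∈ range (N + 1), (-1 : ℝ) ^ k * layerEnergy z α β k with hf
  have hfe : |f| ≤ e := by
    refine (abs_sum_le_sum_abs _ _).trans (sum_le_sum fun k hk => ?_)
    rw [abs_mul, abs_pow, abs_neg, abs_one, one_pow, one_mul, abs_of_nonneg (hE0 k hk)]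
  have hlin : l * (e : ℂ) + (f : ℂ) = 0 := by
    rw [← hid, he, hf]
    push_cast
    rw [mul_sum, ← sum_add_distrib]
    exact sum_congr rfl fun k _ => by ring
  have hre := congrArg Complex.re hlin
  have him := congrArg Complex.im hlin
  simp at hre him
  obtain ⟨h1, h2⟩ := abs_le.1 hfe
  refine ⟨him.resolve_right hpos.ne', ?_, ?_⟩
  · by_contra! h
    nlinarith
  · by_contra! h
    nlinarith

/-- Every complex eigenvalue of `K_{N,s}` (i.e. every root of its
characteristic polynomial over `ℂ`) is real and lies in `[−1/2, 1/2]`;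
in particular `K_{N,s}` has exactly `N` eigenvalues counted with multiplicity,
all real and contained in `[−1/2, 1/2]`. -/
theorem eigenvalues_Ks_real_mem_Icc (N n : ℕ) (hN : 0 < N) (hn : 0 < n) (ξ : ℕ → ℝ)
    (hξ : ∀ i j, 1 ≤ i → i < j → j ≤ N → ξ j < ξ i) (hpos : 0 < ξ N) :
    (∀ μ : ℂ, ((Ks n N ξ).map (Complex.ofReal)).charpoly.IsRoot μ →
        μ.im = 0 ∧ -(1 / 2) ≤ μ.re ∧ μ.re ≤ 1 / 2) ∧
      Multiset.card ((Ks n N ξ).map (Complex.ofReal)).charpoly.roots = N := by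
  have hn' : (0 : ℝ) < n := Nat.cast_pos.2 hn
  refine ⟨fun μ hμ => ?_, ?_⟩
  · rw [IsRoot.def, Matrix.eval_charpoly, ← Matrix.exists_mulVec_eq_zero_iff] at hμ
    obtain ⟨v, hv0, hv⟩ := hμ
    have hrow : ∀ a : Fin N, ∑ b, (Ks n N ξ a b : ℂ) * v b = μ * v a := by
      intro a
      have h := congrFun hv a
      rw [Matrix.sub_mulVec] at h
      simp only [Matrix.scalar_apply, Pi.sub_apply, Matrix.mulVec_diagonal, Pi.zero_apply] at h
      rw [sub_eq_zero] at h
      exact h.symm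
    -- the points `x_k`, with the boundary point `0` appended
    let z : ℕ → ℝ := fun k => if k < N then n * ξ (k + 1) else 0
    have hzlt : ∀ k < N, z k = n * ξ (k + 1) := fun k hk => if_pos hk
    let α : ℕ → ℂ := fun k => ∑ b : Fin N, if (b : ℕ) < k then Real.exp (-z b) * v b else 0
    let β : ℕ → ℂ := fun k => ∑ b : Fin N,
      ((if (b : ℕ) < k then 0 else Real.exp (z b) * v b) - Real.exp (-z b) * v b)
    let w : ℕ → ℂ := fun k => if h : k < N then v ⟨k, h⟩ else 0
    have key := layer_bound N z α β w (2 * μ) ?_ ?_ ?_ ?_ ?_ ?_ ?_ ?_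
    · simp at key
      obtain ⟨h1, h2, h3⟩ := key
      exact ⟨h1, by linarith, by linarith⟩
    · intro k hk
      rw [hzlt k hk]
      by_cases h : k + 1 < N
      · rw [hzlt _ h]
        exact mul_lt_mul_of_pos_left (hξ _ _ (by omega) (by omega) (by omega)) hn'
      · have hkN : k + 1 = N := by omega
        simp only [z, hkN, lt_irrefl, if_false]
        positivity
    · simp [z]
    · simp [α]
    · simp only [α, β]
      rw [← sum_neg_distrib]
      exact sum_congr rfl fun b _ => by simp [b.2]
    · intro k hk
      have : (Real.exp (-z k) : ℂ) * w k =
          ∑ b : Fin N, if b = ⟨k, hk⟩ then Real.exp (-z b) * v b else 0 := by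
        simp [w, hk]
      rw [this]
      simp only [α]
      rw [← sum_add_distrib]
      refine sum_congr rfl fun b _ => ?_
      rcases lt_trichotomy (b : ℕ) k with h | h | h
      · simp [Fin.ext_iff, h, h.ne, h.trans k.lt_succ_self]
      · simp [Fin.ext_iff, h]
      · simp [Fin.ext_iff, h.ne', h.not_gt, show ¬ (b : ℕ) < k + 1 by omega]
    · intro k hk
      have : (Real.exp (z k) : ℂ) * w k =
          ∑ b : Fin N, if b = ⟨k, hk⟩ then Real.exp (z b) * v b else 0 := by
        simp [w, hk]
      rw [this]
      simp only [β]
      rw [← sum_sub_distrib]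
      refine sum_congr rfl fun b _ => ?_
      rcases lt_trichotomy (b : ℕ) k with h | h | h
      · simp [Fin.ext_iff, h, h.ne, h.trans k.lt_succ_self]
      · simp [Fin.ext_iff, h]
      · simp [Fin.ext_iff, h.ne', h.not_gt, show ¬ (b : ℕ) < k + 1 by omega]
    · intro k hk
      have hwk : w k = v ⟨k, hk⟩ := by simp [w, hk]
      rw [hwk, show 2 * (2 * μ) * v ⟨k, hk⟩ = 4 * (μ * v ⟨k, hk⟩) by ring, ← hrow ⟨k, hk⟩]
      simp only [α, β]
      rw [sum_mul, sum_mul, sum_mul, sum_mul, ← sum_sub_distrib, ← sum_sub_distrib,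
        ← sum_add_distrib, mul_sum, mul_sum]
      refine sum_congr rfl fun b _ => ?_
      have hzk := hzlt k hk
      have hzb := hzlt b b.2
      rcases lt_trichotomy (b : ℕ) k with h | h | h
      · have hK : Ks n N ξ ⟨k, hk⟩ b =
            (-1) ^ k * ((Real.exp (z k) + Real.exp (-z k)) / 2 * Real.exp (-z b)) := by
          simp [Ks, Fin.ext_iff, Fin.lt_def, h.ne', h.not_gt, hzk, hzb, Real.cosh_eq]
        rw [hK]
        simp only [h, h.trans k.lt_succ_self, if_true]
        push_cast
        ring
      · have hb : b = ⟨k, hk⟩ := Fin.ext h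
        subst hb
        have hK : Ks n N ξ ⟨k, hk⟩ ⟨k, hk⟩ =
            (-1) ^ k * ((Real.exp (-z k) * Real.exp (-z k)) / 2) := by
          rw [← Real.exp_add]
          simp only [Ks, if_true, hzk]
          ring_nf
        rw [hK]
        simp only [lt_irrefl, k.lt_succ_self, if_true, if_false]
        push_cast
        ring
      · have hK : Ks n N ξ ⟨k, hk⟩ b =
            (-1) ^ (k + 1) * ((Real.exp (z b) - Real.exp (-z b)) / 2 * Real.exp (-z k)) := by
          simp [Ks, Fin.ext_iff, Fin.lt_def, h.ne, h, hzk, hzb, Real.sinh_eq]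
        rw [hK]
        simp only [h.not_gt, show ¬ (b : ℕ) < k + 1 by omega, if_false]
        push_cast
        ring
    · obtain ⟨a, ha⟩ := Function.ne_iff.1 hv0
      exact ⟨a, a.2, by simpa [w] using ha⟩
  · rw [IsAlgClosed.card_roots_eq_natDegree, Matrix.charpoly_natDegree_eq_dim, Fintype.card_fin]
end

section
/- For every λ ∈ ℂ one has det(−λ I_N − K_{N,c}) = (−1)^{N(N+1)/2} · det M_{N,c}^{(n)}(λ) and det(−λ I_N − K_{N,s}) = (−1)^{N(N+1)/2} · det M_{N,s}^{(n)}(λ), where the real matrices K_{N,c} and K_{N,s} are viewed as complex matrices and I_N is the N×N identity matrix. -/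
/-!
Row `a` (counted from `0`) of `-λ I - K` is `(-1) ^ (a + 1)` times row `a` of `M(λ)`, in the even
and in the odd case alike. Pulling these signs out of the determinant yields the factor
`∏ (-1) ^ (a + 1) = (-1) ^ (N (N + 1) / 2)`, computed in `prod_neg_one_pow_succ`.
-/

open Finset

/-- The `n`-order odd generalized polarization matrix `M_{N,s}^{(n)}(λ)`. -/
noncomputable def Ms (n N : ℕ) (ξ : ℕ → ℝ) (l : ℂ) : Matrix (Fin N) (Fin N) ℂ :=
  fun i j =>
    if i = j then
      (-1 : ℂ) ^ (i : ℕ) * l + ((Real.exp (-(2 * n * ξ ((i : ℕ) + 1))) / 2 : ℝ) : ℂ)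
    else if i < j then
      -(((Real.sinh (n * ξ ((j : ℕ) + 1)) * Real.exp (-(n * ξ ((i : ℕ) + 1)))) : ℝ) : ℂ)
    else
      (((Real.cosh (n * ξ ((i : ℕ) + 1)) * Real.exp (-(n * ξ ((j : ℕ) + 1)))) : ℝ) : ℂ)

theorem prod_neg_one_pow_succ (N : ℕ) :
    ∏ a : Fin N, (-1 : ℂ) ^ ((a : ℕ) + 1) = (-1 : ℂ) ^ (N * (N + 1) / 2) := by
  rw [Fin.prod_univ_eq_prod_range (fun a => (-1 : ℂ) ^ (a + 1)) N, Finset.prod_pow_eq_pow_sum]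
  congr 1
  -- Adding the zero term `a = 0` turns the exponent into the sum over `range (N + 1)`.
  have h := Finset.sum_range_succ' (fun a => a) N
  rw [Finset.sum_range_id] at h
  simpa [mul_comm] using h.symm

theorem neg_one_pow_mul_self (a : ℕ) : (-1 : ℂ) ^ a * (-1 : ℂ) ^ a = 1 := by
  rw [← mul_pow]
  simp

/-- `det(−λ I − K_{N,c}) = (−1)^{N(N+1)/2} det M_{N,c}^{(n)}(λ)` and
`det(−λ I − K_{N,s}) = (−1)^{N(N+1)/2} det M_{N,s}^{(n)}(λ)`. -/
theorem det_neg_smul_sub_K (N n : ℕ) (hN : 0 < N) (hn : 0 < n) (ξ : ℕ → ℝ)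
    (hξ : ∀ i j, 1 ≤ i → i < j → j ≤ N → ξ j < ξ i) (hpos : 0 < ξ N) (l : ℂ) :
    ((-l) • (1 : Matrix (Fin N) (Fin N) ℂ) - (Kc n N ξ).map Complex.ofReal).det =
        (-1 : ℂ) ^ (N * (N + 1) / 2) * (Mc n N ξ l).det ∧
      ((-l) • (1 : Matrix (Fin N) (Fin N) ℂ) - (Ks n N ξ).map Complex.ofReal).det =
        (-1 : ℂ) ^ (N * (N + 1) / 2) * (Ms n N ξ l).det := by
  constructor
  · rw [← prod_neg_one_pow_succ, ← Matrix.det_mul_column]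
    congr 1
    ext a b
    simp only [Matrix.sub_apply, Matrix.smul_apply, Matrix.one_apply, Matrix.map_apply,
      Matrix.of_apply, Kc, Mc, smul_eq_mul]
    have h := neg_one_pow_mul_self (a : ℕ)
    split_ifs <;> push_cast <;> first | ring1 | linear_combination l * h
  · rw [← prod_neg_one_pow_succ, ← Matrix.det_mul_column]
    congr 1
    ext a b
    simp only [Matrix.sub_apply, Matrix.smul_apply, Matrix.one_apply, Matrix.map_apply,
      Matrix.of_apply, Ks, Ms, smul_eq_mul]
    have h := neg_one_pow_mul_self (a : ℕ)
    split_ifs <;> push_cast <;> first | ring1 | linear_combination l * h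
end
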